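/- arXiv:1710.01350 — 2 statements merged into one kernel-verified Lean document; each statement's English description precedes it below -/
import Mathlib

section
/- For every integer u ≥ 0 and every finite abelian p-group A, the sum over isomorphism classes of finite abelian p-groups B of |Sur(B,A)| · μ^u(B) equals |A|^{-u}. -/
/-!
Cohen–Lenstra moments: for every integer `u ≥ 0` and every finite abelian `p`-group `A`,
the sum over isomorphism classes of finite abelian `p`-groups `B` of `|Sur(B,A)| · μ^u(B)`
equals `|A|^{-u}`.
-/

open scoped Classical

/-- The number of surjective group homomorphisms `B → A`. -/
noncomputable def numSur (B A : Type*) [AddCommGroup B] [AddCommGroup A] : ℕ :=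
  Nat.card {f : B →+ A // Function.Surjective f}

/-- The number of automorphisms of `A`. -/
noncomputable def numAut (A : Type*) [AddCommGroup A] : ℕ :=
  Nat.card (A ≃+ A)

/-- The infinite product `∏_{k=1}^∞ (1 - p^{-(k+u)})`. -/
noncomputable def clProd (p u : ℕ) : ℝ :=
  ∏' k : ℕ, (1 - (p : ℝ) ^ (-((k : ℤ) + 1 + u)))

/-- The Cohen–Lenstra measure `μ^u(A) = |A|^{-u} |Aut(A)|^{-1} ∏_{k=1}^∞ (1 - p^{-(k+u)})`. -/
noncomputable def clMeasure (p u : ℕ) (A : Type*) [AddCommGroup A] : ℝ :=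
  ((Nat.card A : ℝ) ^ u)⁻¹ * ((numAut A : ℝ))⁻¹ * clProd p u

/-- The finite abelian `p`-group `G_λ = ⨁_i ℤ/p^{λ_i}ℤ` associated to a partition `λ`,
a finite multiset of positive integers. -/
def CLGroup (p : ℕ) (lam : Multiset ℕ+) : Type :=
  ∀ i : Fin lam.toList.length, ZMod (p ^ ((lam.toList.get i : ℕ+) : ℕ))

noncomputable instance (p : ℕ) (lam : Multiset ℕ+) : AddCommGroup (CLGroup p lam) := by
  delta CLGroup; infer_instance

/-!
Fix `n` and count the subgroups `L` of `ℤⁿ` of `p`-power index with weight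
`|Sur(ℤⁿ/L, A)| · [ℤⁿ : L]^{-(n+u)}` in two ways. Exactly `|Sur(ℤⁿ, B)| / |Aut B|` of them have
quotient isomorphic to `B`, so grouping by quotient gives
`∑_B |Sur(B, A)| |B|^{-u} |Aut B|^{-1} P_n(B)`, where `P_n(B) = |Sur(ℤⁿ, B)| / |B|ⁿ` is the
probability that `n` random elements generate `B`. Grouping instead by the induced surjection
`ℤⁿ → A`, whose kernel is again isomorphic to `ℤⁿ`, gives
`|A|^{-u} P_n(A) ∏_{k=1}^n (1 - p^{-(k+u)})⁻¹`: the zeta function counting the subgroups of `ℤⁿ`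
is a product over `k`, because a finite index subgroup of `G × ℤ` is a pair of finite index
subgroups `K ≤ G` and `mℤ ≤ ℤ` together with a homomorphism `mℤ → G/K`.
Now let `n → ∞`: each `P_n(B)` tends to `1` and is at most `1`, so the limit passes through the sum.
-/

open Filter Topology
open scoped ENNReal

section Surjections

variable {M A B B' : Type*} [AddCommGroup M] [AddCommGroup A] [AddCommGroup B] [AddCommGroup B']

theorem numSur_congr_left (e : B ≃+ B') : numSur B A = numSur B' A :=
  Nat.card_congr <| (AddEquiv.addMonoidHomCongrLeftEquiv e).subtypeEquiv fun f =>
    (e.symm.surjective.of_comp_iff f).symm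

theorem numSur_le_card_addMonoidHom [Finite (M →+ B)] : numSur M B ≤ Nat.card (M →+ B) :=
  Finite.card_subtype_le _

theorem numSur_quotient (L : AddSubgroup M) :
    numSur (M ⧸ L) A = Nat.card {f : {f : M →+ A // Function.Surjective f} // L ≤ f.1.ker} :=
  Nat.card_congr
    { toFun := fun f => ⟨⟨f.1.comp (QuotientAddGroup.mk' L),
        f.2.comp (QuotientAddGroup.mk'_surjective L)⟩, fun x hx => by
          simp [AddMonoidHom.mem_ker, (QuotientAddGroup.eq_zero_iff x).2 hx]⟩
      invFun := fun f => ⟨QuotientAddGroup.lift L f.1.1 f.2,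
        QuotientAddGroup.lift_surjective_of_surjective L f.1.1 f.1.2 f.2⟩
      left_inv := fun f => by ext; rfl
      right_inv := fun f => by ext; rfl }

/-- Postcomposing a fixed surjection `M → M ⧸ L ≃ B` with the automorphisms of `B` yields every
surjection `M → B` with kernel `L` exactly once. -/
noncomputable def autEquivSurjectionsWithKer {L : AddSubgroup M} (e : (M ⧸ L) ≃+ B) :
    (B ≃+ B) ≃ {f : {f : M →+ B // Function.Surjective f} // f.1.ker = L} :=
  let π : M →+ B := e.toAddMonoidHom.comp (QuotientAddGroup.mk' L)
  have hπ : Function.Surjective π := e.surjective.comp (QuotientAddGroup.mk'_surjective L)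
  .ofBijective
    (fun σ => ⟨⟨σ.toAddMonoidHom.comp π, σ.surjective.comp hπ⟩, by ext x; simp [π]⟩) <| by
    refine ⟨fun σ τ h => AddEquiv.ext fun b => ?_, ?_⟩
    · obtain ⟨x, rfl⟩ := hπ b
      exact DFunLike.congr_fun (congrArg (fun f => f.1.1) h) x
    · rintro ⟨⟨f, hf⟩, rfl⟩
      refine ⟨e.symm.trans (QuotientAddGroup.quotientKerEquivOfSurjective f hf), ?_⟩
      ext x
      simp [π, QuotientAddGroup.quotientKerEquivOfSurjective]

theorem numSur_eq_card_quotients_mul_numAut : numSur M B =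
    Nat.card {L : AddSubgroup M // Nonempty ((M ⧸ L) ≃+ B)} * numAut B := by
  let kernel (f : {f : M →+ B // Function.Surjective f}) :
      {L : AddSubgroup M // Nonempty ((M ⧸ L) ≃+ B)} :=
    ⟨f.1.ker, ⟨QuotientAddGroup.quotientKerEquivOfSurjective f.1 f.2⟩⟩
  have fiber (L : {L : AddSubgroup M // Nonempty ((M ⧸ L) ≃+ B)}) :
      {f // kernel f = L} ≃ (B ≃+ B) :=
    (Equiv.subtypeEquivRight fun f => Subtype.ext_iff).trans
      (autEquivSurjectionsWithKer L.2.some).symm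
  rw [numSur, numAut, ← Nat.card_prod]
  exact Nat.card_congr <|
    (Equiv.sigmaFiberEquiv kernel).symm.trans (Equiv.sigmaEquivProdOfEquiv fiber)

theorem finite_quotients_equiv [Finite (M →+ B)] :
    Finite {L : AddSubgroup M // Nonempty ((M ⧸ L) ≃+ B)} :=
  .of_surjective (fun f : {f : M →+ B // Function.Surjective f} =>
      ⟨f.1.ker, ⟨QuotientAddGroup.quotientKerEquivOfSurjective f.1 f.2⟩⟩) fun ⟨_, ⟨e⟩⟩ =>
    ⟨(autEquivSurjectionsWithKer e (.refl B)).1,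
      Subtype.ext (autEquivSurjectionsWithKer e (.refl B)).2⟩

theorem numAut_ne_zero [Finite B] : numAut B ≠ 0 :=
  Nat.card_ne_zero.2 ⟨⟨AddEquiv.refl B⟩, inferInstance⟩

theorem card_quotients_eq_numSur_div_numAut [Finite B] :
    (Nat.card {L : AddSubgroup M // Nonempty ((M ⧸ L) ≃+ B)} : ℝ≥0∞) = numSur M B / numAut B := by
  rw [ENNReal.eq_div_iff (Nat.cast_ne_zero.2 numAut_ne_zero) (by finiteness),
    numSur_eq_card_quotients_mul_numAut, Nat.cast_mul, mul_comm]

end Surjections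

section ProductSubgroups

variable {G H : Type*} [AddCommGroup G] [AddCommGroup H]

theorem index_eq_index_comap_inl_mul_index_map_snd (L : AddSubgroup (G × H)) :
    L.index = (L.comap (AddMonoidHom.inl G H)).index * (L.map (AddMonoidHom.snd G H)).index := by
  have hker : (AddMonoidHom.snd G H).ker = (AddMonoidHom.inl G H).range := by
    ext
    simp [AddSubgroup.mem_prod, AddMonoidHom.mem_range, Prod.ext_iff, eq_comm]
  have hrange : (AddMonoidHom.snd G H).range = ⊤ :=
    AddMonoidHom.range_eq_top.2 Prod.snd_surjective
  rw [AddSubgroup.index_map, hrange, AddSubgroup.index_top, mul_one, AddSubgroup.index_comap,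
    hker, sup_comm, ← AddSubgroup.relIndex_sup_right, AddSubgroup.relIndex_mul_index le_sup_right]

variable {L₁ : AddSubgroup G} {H₁ : AddSubgroup H}

/-- The subgroup of `G × H` that meets `G` in `L₁`, projects onto `H₁`, and in which the
`G`-coordinates over `h ∈ H₁` form the coset `φ h`. -/
def subgroupOfHom (φ : H₁ →+ G ⧸ L₁) : AddSubgroup (G × H) :=
  (((QuotientAddGroup.mk' L₁).comp (AddMonoidHom.fst G H₁)).eqLocus
    (φ.comp (AddMonoidHom.snd G H₁))).map ((AddMonoidHom.id G).prodMap H₁.subtype)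

theorem mem_subgroupOfHom {φ : H₁ →+ G ⧸ L₁} {g : G} {h : H} :
    (g, h) ∈ subgroupOfHom φ ↔ ∃ hh : h ∈ H₁, (g : G ⧸ L₁) = φ ⟨h, hh⟩ := by
  constructor
  · rintro ⟨⟨g', h'⟩, hφ, hgh⟩
    obtain ⟨rfl, rfl⟩ := Prod.mk.inj hgh
    exact ⟨h'.2, hφ⟩
  · rintro ⟨hh, hg⟩
    exact ⟨(g, ⟨h, hh⟩), hg, rfl⟩

theorem comap_inl_subgroupOfHom (φ : H₁ →+ G ⧸ L₁) :
    (subgroupOfHom φ).comap (AddMonoidHom.inl G H) = L₁ := by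
  ext g
  have hφ (h0 : (0 : H) ∈ H₁) : φ ⟨0, h0⟩ = 0 := map_zero φ
  simp [mem_subgroupOfHom, hφ]

theorem map_snd_subgroupOfHom (φ : H₁ →+ G ⧸ L₁) :
    (subgroupOfHom φ).map (AddMonoidHom.snd G H) = H₁ := by
  ext h
  constructor
  · rintro ⟨⟨_, _⟩, hL, rfl⟩
    exact (mem_subgroupOfHom.1 hL).1
  · intro hh
    obtain ⟨g, hg⟩ := QuotientAddGroup.mk_surjective (φ ⟨h, hh⟩)
    exact ⟨(g, h), mem_subgroupOfHom.2 ⟨hh, hg⟩, rfl⟩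

theorem subgroupOfHom_injective :
    Function.Injective (subgroupOfHom : (H₁ →+ G ⧸ L₁) → AddSubgroup (G × H)) := by
  intro φ ψ h
  ext ⟨x, hx⟩
  obtain ⟨g, hg⟩ := QuotientAddGroup.mk_surjective (φ ⟨x, hx⟩)
  have hmem : (g, x) ∈ subgroupOfHom ψ := h ▸ mem_subgroupOfHom.2 ⟨hx, hg⟩
  exact hg.symm.trans (mem_subgroupOfHom.1 hmem).2

theorem exists_subgroupOfHom_eq (L : AddSubgroup (G × H)) :
    ∃ φ : L.map (AddMonoidHom.snd G H) →+ G ⧸ L.comap (AddMonoidHom.inl G H),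
      subgroupOfHom φ = L := by
  let π := (AddMonoidHom.snd G H).addSubgroupMap L
  have hπ : Function.Surjective π := AddMonoidHom.addSubgroupMap_surjective _ L
  let ψ : L →+ G ⧸ L.comap (AddMonoidHom.inl G H) :=
    (QuotientAddGroup.mk' _).comp ((AddMonoidHom.fst G H).comp L.subtype)
  have hψ : π.ker ≤ ψ.ker := by
    rintro ⟨⟨g, h⟩, hL⟩ hh
    obtain rfl : h = 0 := congrArg Subtype.val hh
    exact (QuotientAddGroup.eq_zero_iff g).2 hL
  let φ := π.liftOfSurjective hπ ⟨ψ, hψ⟩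
  have hφ (x : L) : φ (π x) = ψ x := π.liftOfRightInverse_comp_apply _ _ ⟨ψ, hψ⟩ x
  refine ⟨φ, AddSubgroup.ext fun ⟨g, h⟩ => mem_subgroupOfHom.trans ⟨?_, fun hL =>
    ⟨⟨_, hL, rfl⟩, (hφ ⟨_, hL⟩).symm⟩⟩⟩
  rintro ⟨⟨⟨g', _⟩, hL, rfl⟩, hg⟩
  have hg' : g - g' ∈ L.comap (AddMonoidHom.inl G H) :=
    QuotientAddGroup.eq_iff_sub_mem.1 (hg.trans (hφ ⟨_, hL⟩))
  simpa using L.add_mem hg' hL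

/-- Subgroups of `G × H` that meet `G` in `L₁` and project onto `H₁` correspond to homomorphisms
`H₁ → G ⧸ L₁`. -/
noncomputable def homEquivSubgroups : (H₁ →+ G ⧸ L₁) ≃ {L : AddSubgroup (G × H) //
    (L.comap (AddMonoidHom.inl G H), L.map (AddMonoidHom.snd G H)) = (L₁, H₁)} :=
  .ofBijective (fun φ => ⟨subgroupOfHom φ, Prod.ext (comap_inl_subgroupOfHom φ)
    (map_snd_subgroupOfHom φ)⟩) <| by
    refine ⟨fun φ ψ h => subgroupOfHom_injective (congrArg Subtype.val h), ?_⟩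
    rintro ⟨L, hL⟩
    obtain ⟨rfl, rfl⟩ := Prod.mk.inj hL
    exact (exists_subgroupOfHom_eq L).imp fun φ hφ => Subtype.ext hφ

end ProductSubgroups

section Free

variable (M B : Type*) [AddCommGroup M] [Module.Free ℤ M] [Module.Finite ℤ M] [AddCommGroup B]

/-- A homomorphism from a free abelian group is given by the images of a basis. -/
noncomputable def homEquivFun : (M →+ B) ≃ (Fin (Module.finrank ℤ M) → B) :=
  (addMonoidHomLequivInt ℤ).toEquiv.trans ((Module.finBasis ℤ M).constr ℤ).symm.toEquiv

theorem card_addMonoidHom_of_free :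
    Nat.card (M →+ B) = Nat.card B ^ Module.finrank ℤ M := by
  rw [Nat.card_congr (homEquivFun M B), Nat.card_fun, Nat.card_fin]

theorem finite_addMonoidHom_of_free [Finite B] : Finite (M →+ B) :=
  .of_equiv _ (homEquivFun M B).symm

variable {M} (K : AddSubgroup M)

instance : Module.Free ℤ K :=
  inferInstanceAs (Module.Free ℤ K.toIntSubmodule)

instance : Module.Finite ℤ K :=
  inferInstanceAs (Module.Finite ℤ K.toIntSubmodule)

end Free

section SubgroupZeta

/-- The sum `∑ w([M : L])` over all subgroups `L` of `M`; those of infinite index contribute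
`w 0`. For `w m = m⁻ˢ` it is the zeta function of `M`. -/
noncomputable def subgroupZeta (w : ℕ → ℝ≥0∞) (M : Type*) [AddCommGroup M] : ℝ≥0∞ :=
  ∑' L : AddSubgroup M, w L.index

variable {M N : Type*} [AddCommGroup M] [AddCommGroup N]

theorem subgroupZeta_congr (w : ℕ → ℝ≥0∞) (e : M ≃+ N) :
    subgroupZeta w M = subgroupZeta w N :=
  (tsum_congr fun L => congrArg w (AddSubgroup.index_map_equiv L e).symm).trans <|
    e.mapAddSubgroup.toEquiv.tsum_eq fun L => w L.index

theorem subgroupZeta_of_subsingleton [Subsingleton M] (w : ℕ → ℝ≥0∞) :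
    subgroupZeta w M = w 1 := by
  rw [subgroupZeta, tsum_eq_single ⊤ fun L hL => absurd (Subsingleton.elim L ⊤) hL,
    AddSubgroup.index_top]

theorem subgroupZeta_int (w : ℕ → ℝ≥0∞) : subgroupZeta w ℤ = ∑' m, w m := by
  let multiples (m : ℕ) : AddSubgroup ℤ := .zmultiples (m : ℤ)
  have hindex (m : ℕ) : (multiples m).index = m := by simp [multiples, Int.index_zmultiples]
  have hbij : Function.Bijective multiples := by
    refine ⟨Function.LeftInverse.injective hindex, fun L => ?_⟩
    obtain ⟨a, rfl⟩ := Int.subgroup_cyclic L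
    exact ⟨a.natAbs, by rw [← AddSubgroup.zmultiples_eq_closure]; exact Int.zmultiples_natAbs a⟩
  rw [subgroupZeta, ← (Equiv.ofBijective multiples hbij).tsum_eq]
  exact tsum_congr fun m => congrArg w (hindex m)

theorem tsum_subgroups_le (w : ℕ →*₀ ℝ≥0∞) (K : AddSubgroup M) :
    ∑' L : {L : AddSubgroup M // L ≤ K}, w L.1.index = w K.index * subgroupZeta w K := by
  rw [subgroupZeta, ← ENNReal.tsum_mul_left,
    ← (AddSubgroup.MapSubtype.orderIso K).toEquiv.tsum_eq]
  refine tsum_congr fun L => ?_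
  rw [← map_mul, mul_comm, ← AddSubgroup.index_map_subtype]
  rfl

section Product

variable (w : ℕ →*₀ ℝ≥0∞) {G H : Type*} [AddCommGroup G] [AddCommGroup H]
  [Module.Free ℤ H] [Module.Finite ℤ H]

theorem tsum_subgroups_comap_inl_map_snd_eq (L₁ : AddSubgroup G) (H₁ : AddSubgroup H) :
    ∑' L : {L : AddSubgroup (G × H) //
        (L.comap (AddMonoidHom.inl G H), L.map (AddMonoidHom.snd G H)) = (L₁, H₁)}, w L.1.index =
      L₁.index ^ Module.finrank ℤ H * w L₁.index * w H₁.index := by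
  rw [← homEquivSubgroups.tsum_eq]
  have hindex (φ : H₁ →+ G ⧸ L₁) :
      w (homEquivSubgroups φ).1.index = w L₁.index * w H₁.index := by
    have hL := Prod.mk.inj (homEquivSubgroups φ).2
    rw [index_eq_index_comap_inl_mul_index_map_snd, map_mul, hL.1, hL.2]
  simp only [hindex, ENNReal.tsum_const]
  rcases eq_or_ne L₁.index 0 with h₁ | h₁
  · simp [h₁]
  rcases eq_or_ne H₁.index 0 with h₂ | h₂
  · simp [h₂]
  have : Finite (G ⧸ L₁) := Nat.finite_of_card_ne_zero h₁
  have : H₁.FiniteIndex := ⟨h₂⟩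
  have := finite_addMonoidHom_of_free H₁ (G ⧸ L₁)
  rw [ENat.card_eq_coe_natCard, card_addMonoidHom_of_free, H₁.finrank_eq_of_finiteIndex,
    mul_assoc]
  simp [AddSubgroup.index]

theorem subgroupZeta_prod : subgroupZeta w (G × H) =
    subgroupZeta (fun m => m ^ Module.finrank ℤ H * w m) G * subgroupZeta w H := by
  let projections (L : AddSubgroup (G × H)) :=
    (L.comap (AddMonoidHom.inl G H), L.map (AddMonoidHom.snd G H))
  rw [subgroupZeta, ← (Equiv.sigmaFiberEquiv projections).tsum_eq, ENNReal.tsum_sigma',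
    ENNReal.tsum_prod']
  simp only [Equiv.sigmaFiberEquiv_apply, projections, tsum_subgroups_comap_inl_map_snd_eq,
    ENNReal.tsum_mul_left, ENNReal.tsum_mul_right]
  rfl

end Product

end SubgroupZeta

section PrimePowerWeight

theorem mul_mem_powers_iff {p : ℕ} (hp : p.Prime) {a b : ℕ} :
    a * b ∈ Submonoid.powers p ↔ a ∈ Submonoid.powers p ∧ b ∈ Submonoid.powers p := by
  refine ⟨fun ⟨k, hk⟩ => ?_, fun h => mul_mem h.1 h.2⟩
  obtain ⟨i, -, hi⟩ := (Nat.dvd_prime_pow hp).1 (Dvd.intro b hk.symm)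
  obtain ⟨j, -, hj⟩ := (Nat.dvd_prime_pow hp).1 (Dvd.intro_left a hk.symm)
  exact ⟨⟨i, hi.symm⟩, ⟨j, hj.symm⟩⟩

variable (p : ℕ) [Fact p.Prime]

/-- The multiplicative weight `m ↦ m⁻ˢ` on powers of `p`, extended by zero. -/
noncomputable def primePowerWeight (s : ℕ) : ℕ →*₀ ℝ≥0∞ where
  toFun := (Submonoid.powers p : Set ℕ).indicator fun m => ((m : ℝ≥0∞) ^ s)⁻¹
  map_zero' := Set.indicator_of_notMem
    (fun h => h.elim fun k => pow_ne_zero k (Fact.out : p.Prime).ne_zero) _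
  map_one' := by simp [one_mem]
  map_mul' a b := by
    by_cases hab : a ∈ Submonoid.powers p ∧ b ∈ Submonoid.powers p
    · have hmul := (mul_mem_powers_iff Fact.out).2 hab
      simp only [Set.indicator, SetLike.mem_coe, hab, hmul, if_true, Nat.cast_mul, mul_pow]
      exact ENNReal.mul_inv (.inr (by finiteness)) (.inl (by finiteness))
    · have hmul := mt (mul_mem_powers_iff Fact.out).1 hab
      rcases not_and_or.1 hab with h | h <;> simp [Set.indicator, hmul, h]

variable {p}

theorem coe_primePowerWeight (s : ℕ) : ⇑(primePowerWeight p s) =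
    (Submonoid.powers p : Set ℕ).indicator fun m => ((m : ℝ≥0∞) ^ s)⁻¹ := rfl

theorem primePowerWeight_pow (s k : ℕ) :
    primePowerWeight p s (p ^ k) = (((p ^ k : ℕ) : ℝ≥0∞) ^ s)⁻¹ := by
  rw [coe_primePowerWeight, Set.indicator_of_mem (pow_mem (Submonoid.mem_powers p) k)]

theorem primePowerWeight_of_notMem_powers {m : ℕ} (hm : m ∉ Submonoid.powers p) (s : ℕ) :
    primePowerWeight p s m = 0 := by
  rw [coe_primePowerWeight, Set.indicator_of_notMem hm]

theorem pow_mul_primePowerWeight (r s m : ℕ) :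
    m ^ r * primePowerWeight p (r + s) m = primePowerWeight p s m := by
  by_cases hm : m ∈ Submonoid.powers p
  · obtain ⟨k, rfl⟩ := hm
    have hpk : p ^ k ≠ 0 := pow_ne_zero k (Fact.out : p.Prime).ne_zero
    rw [primePowerWeight_pow, primePowerWeight_pow, pow_add,
      ENNReal.mul_inv (.inr (by finiteness)) (.inl (by finiteness)), ← mul_assoc,
      ENNReal.mul_inv_cancel (pow_ne_zero r (Nat.cast_ne_zero.2 hpk)) (by finiteness), one_mul]
  · simp [primePowerWeight_of_notMem_powers hm]

theorem tsum_primePowerWeight (s : ℕ) :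
    ∑' m, primePowerWeight p s m = (1 - ((p : ℝ≥0∞) ^ s)⁻¹)⁻¹ := by
  have hinj : Function.Injective fun k => p ^ k :=
    Nat.pow_right_injective (Fact.out : p.Prime).two_le
  rw [← ENNReal.tsum_geometric, ← hinj.tsum_eq]
  · refine tsum_congr fun k => ?_
    rw [primePowerWeight_pow, Nat.cast_pow, pow_right_comm, ENNReal.inv_pow]
  · exact fun m hm => not_imp_comm.1 (primePowerWeight_of_notMem_powers · s) hm

/-- The product `∏_{k=1}^n (1 - p^{-(k+u)})⁻¹`. -/
noncomputable def invPartialProd (p u n : ℕ) : ℝ≥0∞ :=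
  ∏ k ∈ Finset.range n, (1 - ((p : ℝ≥0∞) ^ (k + 1 + u))⁻¹)⁻¹

theorem subgroupZeta_primePowerWeight_fin (u n : ℕ) :
    subgroupZeta (primePowerWeight p (n + u)) (Fin n → ℤ) = invPartialProd p u n := by
  induction n with
  | zero => rw [subgroupZeta_of_subsingleton, map_one, invPartialProd, Finset.prod_range_zero]
  | succ n ih =>
    let e : (Fin (n + 1) → ℤ) ≃ₗ[ℤ] (Fin n → ℤ) × ℤ := .ofFinrankEq _ _ (by simp)
    have hweight (m : ℕ) : (m : ℝ≥0∞) ^ Module.finrank ℤ ℤ * primePowerWeight p (n + 1 + u) m =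
        primePowerWeight p (n + u) m := by
      rw [Module.finrank_self, ← pow_mul_primePowerWeight 1 (n + u), add_right_comm, add_comm _ 1]
    rw [subgroupZeta_congr _ e.toAddEquiv, subgroupZeta_prod]
    simp only [hweight]
    rw [ih, subgroupZeta_int, tsum_primePowerWeight, invPartialProd, invPartialProd,
      Finset.prod_range_succ, add_right_comm]

theorem subgroupZeta_primePowerWeight_of_free (u : ℕ) (M : Type*) [AddCommGroup M]
    [Module.Free ℤ M] [Module.Finite ℤ M] :
    subgroupZeta (primePowerWeight p (Module.finrank ℤ M + u)) M =
      invPartialProd p u (Module.finrank ℤ M) := by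
  rw [subgroupZeta_congr _ (Module.finBasis ℤ M).equivFun.toAddEquiv,
    subgroupZeta_primePowerWeight_fin]

end PrimePowerWeight

section DoubleCounting

theorem tsum_const_of_finite {α : Type*} [Finite α] (c : ℝ≥0∞) :
    ∑' _ : α, c = Nat.card α * c := by
  simp [ENat.card_eq_coe_natCard]

theorem tsum_tsum_subtype_comm {α β : Type*} (R : α → β → Prop) (f : α → β → ℝ≥0∞) :
    ∑' a, ∑' b : {b // R a b}, f a b = ∑' b, ∑' a : {a // R a b}, f a b := by
  have hrow (a : α) := tsum_subtype {b | R a b} (f a)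
  have hcol (b : β) := tsum_subtype {a | R a b} (f · b)
  exact (tsum_congr hrow).trans (ENNReal.tsum_comm.trans (tsum_congr hcol).symm)

variable {M A : Type*} [AddCommGroup M] [AddCommGroup A]

theorem tsum_numSur_quotient_mul [Finite (M →+ A)] (w : ℕ →*₀ ℝ≥0∞) :
    ∑' L : AddSubgroup M, numSur (M ⧸ L) A * w L.index =
      ∑' φ : {f : M →+ A // Function.Surjective f}, w (Nat.card A) * subgroupZeta w φ.1.ker := by
  have hindex (φ : {f : M →+ A // Function.Surjective f}) : φ.1.ker.index = Nat.card A :=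
    Nat.card_congr (QuotientAddGroup.quotientKerEquivOfSurjective φ.1 φ.2).toEquiv
  calc ∑' L : AddSubgroup M, numSur (M ⧸ L) A * w L.index
    _ = ∑' L : AddSubgroup M, ∑' _ : {φ : {f : M →+ A // Function.Surjective f} // L ≤ φ.1.ker},
          w L.index := by simp only [numSur_quotient, tsum_const_of_finite]
    _ = ∑' φ : {f : M →+ A // Function.Surjective f}, ∑' L : {L // L ≤ φ.1.ker}, w L.1.index :=
      tsum_tsum_subtype_comm _ fun (L : AddSubgroup M) _ => w L.index
    _ = _ := by simp only [tsum_subgroups_le, hindex]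

theorem tsum_numSur_quotient_mul_primePowerWeight [Module.Free ℤ M] [Module.Finite ℤ M] [Finite A]
    (p : ℕ) [Fact p.Prime] (u : ℕ) :
    ∑' L : AddSubgroup M,
        numSur (M ⧸ L) A * primePowerWeight p (Module.finrank ℤ M + u) L.index =
      numSur M A * (primePowerWeight p (Module.finrank ℤ M + u) (Nat.card A) *
        invPartialProd p u (Module.finrank ℤ M)) := by
  have := finite_addMonoidHom_of_free M A
  have hker (φ : {f : M →+ A // Function.Surjective f}) :
      subgroupZeta (primePowerWeight p (Module.finrank ℤ M + u)) φ.1.ker =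
        invPartialProd p u (Module.finrank ℤ M) := by
    have : φ.1.ker.FiniteIndex := inferInstance
    rw [← φ.1.ker.finrank_eq_of_finiteIndex, subgroupZeta_primePowerWeight_of_free]
  rw [tsum_numSur_quotient_mul]
  simp only [hker, tsum_const_of_finite, numSur]

theorem tsum_subgroups_eq_tsum_quotients {ι : Type*} (G : ι → Type*) [∀ i, AddCommGroup (G i)]
    [∀ i, Finite (M →+ G i)] (hG : ∀ i j, Nonempty (G i ≃+ G j) → i = j)
    {F : AddSubgroup M → ℝ≥0∞} {g : ι → ℝ≥0∞}
    (hFg : ∀ L i, Nonempty ((M ⧸ L) ≃+ G i) → F L = g i)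
    (hF : ∀ L, F L ≠ 0 → ∃ i, Nonempty ((M ⧸ L) ≃+ G i)) :
    ∑' L, F L = ∑' i, Nat.card {L : AddSubgroup M // Nonempty ((M ⧸ L) ≃+ G i)} * g i := by
  have hone (L : AddSubgroup M) : ∑' _ : {i // Nonempty ((M ⧸ L) ≃+ G i)}, F L = F L := by
    rcases eq_or_ne (F L) 0 with h0 | h0
    · simp [h0]
    obtain ⟨i, ⟨e⟩⟩ := hF L h0
    have : Unique {i // Nonempty ((M ⧸ L) ≃+ G i)} :=
      ⟨⟨i, ⟨e⟩⟩, fun ⟨j, ⟨e'⟩⟩ => Subtype.ext (hG j i ⟨e'.symm.trans e⟩)⟩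
    rw [tsum_const_of_finite, Nat.card_unique, Nat.cast_one, one_mul]
  calc ∑' L, F L
    _ = ∑' L, ∑' _ : {i // Nonempty ((M ⧸ L) ≃+ G i)}, F L := tsum_congr fun L => (hone L).symm
    _ = ∑' i, ∑' L : {L : AddSubgroup M // Nonempty ((M ⧸ L) ≃+ G i)}, F L :=
      tsum_tsum_subtype_comm _ fun L _ => F L
    _ = ∑' i, ∑' _ : {L : AddSubgroup M // Nonempty ((M ⧸ L) ≃+ G i)}, g i :=
      tsum_congr fun i => tsum_congr fun L => hFg L i L.2
    _ = _ := tsum_congr fun i =>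
      have := finite_quotients_equiv (M := M) (B := G i)
      tsum_const_of_finite _

end DoubleCounting

section Reindexing

theorem exists_equiv_of_map_univ_eq {ι κ β : Type*} [Fintype ι] [Fintype κ] {f : ι → β} {g : κ → β}
    (h : (Finset.univ : Finset ι).val.map f = (Finset.univ : Finset κ).val.map g) :
    ∃ σ : ι ≃ κ, ∀ i, g (σ i) = f i := by
  have hcard (b : β) : Nonempty ({i // f i = b} ≃ {k // g k = b}) := by
    rw [← Fintype.card_eq, Fintype.card_subtype, Fintype.card_subtype]
    have hcount := congrArg (Multiset.count b) h
    simp only [Multiset.count_map, eq_comm (a := b)] at hcount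
    exact hcount
  let fiberEquiv (b : β) := (hcard b).some
  exact ⟨(Equiv.sigmaFiberEquiv f).symm.trans
    ((Equiv.sigmaCongrRight fiberEquiv).trans (Equiv.sigmaFiberEquiv g)),
    fun i => (fiberEquiv (f i) ⟨i, rfl⟩).2⟩

theorem map_univ_toList_get {α : Type*} (s : Multiset α) :
    (Finset.univ : Finset (Fin s.toList.length)).val.map s.toList.get = s := by
  rw [Fin.univ_val_map, List.ofFn_get, Multiset.coe_toList]

/-- The conjugate partition measures the growth of `∑ min b k`, so a multiplicity is a second
difference. -/
theorem sum_min_second_difference (lam : Multiset ℕ+) (a : ℕ+) :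
    (lam.map fun b : ℕ+ => min (b : ℕ) (a - 1)).sum +
        (lam.map fun b : ℕ+ => min (b : ℕ) (a + 1)).sum + lam.count a =
      2 * (lam.map fun b : ℕ+ => min (b : ℕ) a).sum := by
  induction lam using Multiset.induction_on with
  | empty => simp
  | cons b s ih =>
    simp only [Multiset.map_cons, Multiset.sum_cons, Multiset.count_cons, ← PNat.coe_inj]
    have := a.pos
    split_ifs <;> omega

end Reindexing

namespace CLGroup

variable {p : ℕ}

theorem nonempty_pi_addEquiv {ι : Type*} [Fintype ι] (a : ι → ℕ+) :
    Nonempty ((∀ i, ZMod (p ^ (a i : ℕ))) ≃+ CLGroup p (Finset.univ.val.map a)) := by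
  obtain ⟨σ, hσ⟩ := exists_equiv_of_map_univ_eq
    (map_univ_toList_get ((Finset.univ : Finset ι).val.map a)).symm
  generalize Finset.univ.val.map a = lam at *
  obtain rfl : (fun i => lam.toList.get (σ i)) = a := funext hσ
  exact ⟨(RingEquiv.piCongrLeft (fun j => ZMod (p ^ (lam.toList.get j : ℕ))) σ).toAddEquiv⟩

theorem exists_addEquiv (hp : p.Prime) {Q : Type*} [AddCommGroup Q] {k : ℕ}
    (hQ : Nat.card Q = p ^ k) : ∃ lam, Nonempty (Q ≃+ CLGroup p lam) := by
  have : Finite Q := Nat.finite_of_card_ne_zero (hQ ▸ pow_ne_zero k hp.ne_zero)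
  obtain ⟨ι, _, n, hn, ⟨e⟩⟩ := AddCommGroup.equiv_directSum_zmod_of_finite' Q
  let e' := e.trans (DirectSum.addEquivProd fun i => ZMod (n i))
  have hprod : ∏ i, n i = p ^ k := by
    simp [← hQ, Nat.card_congr e'.toEquiv, Nat.card_pi]
  have hpow (i : ι) : ∃ a : ℕ+, p ^ (a : ℕ) = n i := by
    obtain ⟨l, -, hl⟩ :=
      (Nat.dvd_prime_pow hp).1 (hprod ▸ Finset.dvd_prod_of_mem n (Finset.mem_univ i))
    have hl0 : l ≠ 0 := by
      rintro rfl
      exact (hn i).ne' hl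
    exact ⟨⟨l, Nat.pos_of_ne_zero hl0⟩, hl.symm⟩
  choose a ha using hpow
  obtain rfl : (fun i => p ^ (a i : ℕ)) = n := funext ha
  exact ⟨_, (nonempty_pi_addEquiv a).map e'.trans⟩

theorem card_eq_pow (lam : Multiset ℕ+) :
    Nat.card (CLGroup p lam) = p ^ ∑ i, (lam.toList.get i : ℕ) := by
  rw [CLGroup, Nat.card_pi]
  simp only [Nat.card_zmod, Finset.prod_pow_eq_pow_sum]

theorem finite (hp : p.Prime) (lam : Multiset ℕ+) : Finite (CLGroup p lam) :=
  Nat.finite_of_card_ne_zero (card_eq_pow (p := p) lam ▸ pow_ne_zero _ hp.ne_zero)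

theorem card_torsion (hp : p.Prime) (lam : Multiset ℕ+) (k : ℕ) :
    Nat.card {x : CLGroup p lam // p ^ k • x = 0} =
      p ^ (lam.map fun b : ℕ+ => min (b : ℕ) k).sum := by
  have hcyclic (b : ℕ+) : Nat.card {x : ZMod (p ^ (b : ℕ)) // p ^ k • x = 0} =
      p ^ min (b : ℕ) k := by
    have : NeZero (p ^ (b : ℕ)) := ⟨pow_ne_zero _ hp.ne_zero⟩
    have hgcd : (p ^ (b : ℕ)).gcd (p ^ k) = p ^ min (b : ℕ) k := by
      rcases le_total (b : ℕ) k with h | h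
      · rw [min_eq_left h, Nat.gcd_eq_left (pow_dvd_pow p h)]
      · rw [min_eq_right h, Nat.gcd_eq_right (pow_dvd_pow p h)]
    have hker := IsAddCyclic.card_nsmulAddMonoidHom_ker (ZMod (p ^ (b : ℕ))) (p ^ k)
    rw [Nat.card_zmod, hgcd] at hker
    exact hker
  let e : {x : CLGroup p lam // p ^ k • x = 0} ≃
      ∀ i, {x : ZMod (p ^ (lam.toList.get i : ℕ)) // p ^ k • x = 0} :=
    ⟨fun x i => ⟨x.1 i, congrFun x.2 i⟩, fun y => ⟨fun i => (y i).1, funext fun i => (y i).2⟩,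
      fun x => rfl, fun y => rfl⟩
  rw [Nat.card_congr e, Nat.card_pi]
  simp only [hcyclic, Finset.prod_pow_eq_pow_sum]
  conv_rhs => rw [← map_univ_toList_get lam, Multiset.map_map]
  rfl

theorem eq_of_addEquiv (hp : p.Prime) {lam mu : Multiset ℕ+}
    (e : CLGroup p lam ≃+ CLGroup p mu) : lam = mu := by
  have hsum (k : ℕ) : (lam.map fun b : ℕ+ => min (b : ℕ) k).sum =
      (mu.map fun b : ℕ+ => min (b : ℕ) k).sum := by
    apply Nat.pow_right_injective hp.two_le
    simp only [← card_torsion hp]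
    exact Nat.card_congr <| e.toEquiv.subtypeEquiv fun x => by
      rw [AddEquiv.toEquiv_eq_coe, AddEquiv.coe_toEquiv, ← map_nsmul, e.map_eq_zero_iff]
  ext a
  have hlam := sum_min_second_difference lam a
  rw [hsum, hsum, hsum, ← sum_min_second_difference mu a] at hlam
  exact Nat.add_left_cancel hlam

end CLGroup

section GenerationProbability

/-- The probability that `n` independent uniform elements of the finite group `B` generate `B`,
in terms of the `|B|ⁿ` homomorphisms `ℤⁿ → B`. -/
noncomputable def generationProb (n : ℕ) (B : Type*) [AddCommGroup B] : ℝ≥0∞ :=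
  numSur (Fin n → ℤ) B / Nat.card B ^ n

variable (n : ℕ) (B : Type*) [AddCommGroup B]

theorem card_fin_int_addMonoidHom : Nat.card ((Fin n → ℤ) →+ B) = Nat.card B ^ n := by
  rw [card_addMonoidHom_of_free, Module.finrank_fin_fun]

theorem card_addMonoidHom_le_numSur_add_sum (M : Type*) [AddCommGroup M]
    [Finite (M →+ B)] [Fintype {H : AddSubgroup B // H ≠ ⊤}] :
    Nat.card (M →+ B) ≤
      numSur M B + ∑ H : {H : AddSubgroup B // H ≠ ⊤}, Nat.card (M →+ H.1) := by
  have (H : AddSubgroup B) : Finite (M →+ H) :=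
    .of_injective H.subtype.comp fun _ _ => (AddMonoidHom.cancel_left H.subtype_injective).1
  rw [numSur, ← Nat.card_sigma, ← Nat.card_sum]
  refine Nat.card_le_card_of_surjective
    (Sum.elim (fun f : {f : M →+ B // Function.Surjective f} => f.1)
      fun d : Σ H : {H : AddSubgroup B // H ≠ ⊤}, M →+ H.1 => d.1.1.subtype.comp d.2) fun f => ?_
  by_cases hf : Function.Surjective f
  · exact ⟨.inl ⟨f, hf⟩, rfl⟩
  · exact ⟨.inr ⟨⟨f.range, mt AddMonoidHom.range_eq_top.1 hf⟩, f.rangeRestrict⟩, rfl⟩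

variable [Finite B]

theorem generationProb_le_one : generationProb n B ≤ 1 := by
  have := finite_addMonoidHom_of_free (Fin n → ℤ) B
  refine ENNReal.div_le_of_le_mul ?_
  rw [one_mul]
  exact_mod_cast numSur_le_card_addMonoidHom.trans_eq (card_fin_int_addMonoidHom n B)

theorem one_le_generationProb_add_sum [Fintype {H : AddSubgroup B // H ≠ ⊤}] :
    1 ≤ generationProb n B +
      ∑ H : {H : AddSubgroup B // H ≠ ⊤}, ((Nat.card H.1 : ℝ≥0∞) / Nat.card B) ^ n := by
  have := finite_addMonoidHom_of_free (Fin n → ℤ) B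
  have hcount := card_addMonoidHom_le_numSur_add_sum B (Fin n → ℤ)
  simp only [card_fin_int_addMonoidHom] at hcount
  have hB : (Nat.card B : ℝ≥0∞) ^ n ≠ 0 := pow_ne_zero n (Nat.cast_ne_zero.2 Nat.card_pos.ne')
  simp only [generationProb, div_eq_mul_inv, mul_pow, ← ENNReal.inv_pow, ← Finset.sum_mul,
    ← add_mul]
  rw [← div_eq_mul_inv, ENNReal.le_div_iff_mul_le (.inl hB) (.inl (by finiteness)), one_mul]
  exact_mod_cast hcount

theorem tendsto_generationProb : Tendsto (generationProb · B) atTop (𝓝 1) := by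
  have := Fintype.ofFinite {H : AddSubgroup B // H ≠ ⊤}
  have hratio (H : {H : AddSubgroup B // H ≠ ⊤}) : (Nat.card H.1 : ℝ≥0∞) / Nat.card B < 1 := by
    have hlt : Nat.card H.1 < Nat.card B := lt_of_le_of_ne (AddSubgroup.card_le_card_addGroup H.1)
      (mt (AddSubgroup.eq_top_of_card_eq H.1) H.2)
    rw [ENNReal.div_lt_iff (.inl (Nat.cast_ne_zero.2 Nat.card_pos.ne')) (.inl (by finiteness)),
      one_mul]
    exact_mod_cast hlt
  have hsum : Tendsto (fun n => ∑ H : {H : AddSubgroup B // H ≠ ⊤},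
      ((Nat.card H.1 : ℝ≥0∞) / Nat.card B) ^ n) atTop (𝓝 0) := by
    simpa using tendsto_finsetSum Finset.univ fun H _ =>
      ENNReal.tendsto_pow_atTop_nhds_zero_of_lt_one (hratio H)
  have hlower := ENNReal.Tendsto.sub tendsto_const_nhds hsum (.inl ENNReal.one_ne_top)
  rw [tsub_zero] at hlower
  exact tendsto_of_tendsto_of_tendsto_of_le_of_le hlower tendsto_const_nhds
    (fun n => tsub_le_iff_right.2 (one_le_generationProb_add_sum n B))
    (fun n => generationProb_le_one n B)

theorem numSur_mul_primePowerWeight (p : ℕ) [Fact p.Prime] (u : ℕ) :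
    numSur (Fin n → ℤ) B * primePowerWeight p (n + u) (Nat.card B) =
      primePowerWeight p u (Nat.card B) * generationProb n B := by
  have hB : (Nat.card B : ℝ≥0∞) ^ n ≠ 0 := pow_ne_zero n (Nat.cast_ne_zero.2 Nat.card_pos.ne')
  rw [← pow_mul_primePowerWeight n u, mul_right_comm, generationProb,
    ENNReal.mul_div_cancel hB (by finiteness)]

end GenerationProbability

section NormalizingProduct

variable {p : ℕ}

theorem clProd_eq_tprod_one_add (p u : ℕ) :
    clProd p u = ∏' k : ℕ, (1 + -((p : ℝ) ^ (k + 1 + u))⁻¹) := by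
  refine tprod_congr fun k => ?_
  rw [zpow_neg, sub_eq_add_neg]
  rfl

theorem inv_pow_succ_add_lt_one (hp : 1 < p) (u k : ℕ) : ((p : ℝ) ^ (k + 1 + u))⁻¹ < 1 :=
  inv_lt_one_of_one_lt₀ (one_lt_pow₀ (Nat.one_lt_cast.2 hp) (by omega))

theorem summable_norm_neg_inv_pow (hp : 1 < p) (u : ℕ) :
    Summable fun k : ℕ => ‖-((p : ℝ) ^ (k + 1 + u))⁻¹‖ := by
  have hgeom : Summable fun k : ℕ => ((p : ℝ)⁻¹) ^ k * ((p : ℝ)⁻¹) ^ (1 + u) :=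
    (summable_geometric_of_lt_one (by positivity)
      (inv_lt_one_of_one_lt₀ (Nat.one_lt_cast.2 hp))).mul_right _
  refine hgeom.congr fun k => ?_
  rw [norm_neg, Real.norm_of_nonneg (by positivity), ← pow_add, inv_pow, add_assoc]

theorem tendsto_prod_clProd (hp : 1 < p) (u : ℕ) :
    Tendsto (fun n => ∏ k ∈ Finset.range n, (1 - ((p : ℝ) ^ (k + 1 + u))⁻¹)) atTop
      (𝓝 (clProd p u)) := by
  simp only [clProd_eq_tprod_one_add, sub_eq_add_neg]
  exact (multipliable_one_add_of_summable
    (summable_norm_neg_inv_pow hp u)).hasProd.tendsto_prod_nat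

theorem clProd_pos (hp : 1 < p) (u : ℕ) : 0 < clProd p u := by
  refine lt_of_le_of_ne (ge_of_tendsto' (tendsto_prod_clProd hp u) fun n =>
    Finset.prod_nonneg fun k _ => sub_nonneg.2 (inv_pow_succ_add_lt_one hp u k).le) (Ne.symm ?_)
  rw [clProd_eq_tprod_one_add]
  refine tprod_one_add_ne_zero_of_summable (fun k => ?_) (summable_norm_neg_inv_pow hp u)
  rw [← sub_eq_add_neg]
  exact (sub_pos.2 (inv_pow_succ_add_lt_one hp u k)).ne'

theorem tendsto_invPartialProd (hp : 1 < p) (u : ℕ) :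
    Tendsto (invPartialProd p u) atTop (𝓝 (ENNReal.ofReal (clProd p u)⁻¹)) := by
  have hfactor (k : ℕ) : 0 < 1 - ((p : ℝ) ^ (k + 1 + u))⁻¹ :=
    sub_pos.2 (inv_pow_succ_add_lt_one hp u k)
  have hlim := ENNReal.tendsto_ofReal
    ((tendsto_prod_clProd hp u).inv₀ (clProd_pos hp u).ne')
  refine hlim.congr fun n => ?_
  rw [← Finset.prod_inv_distrib,
    ENNReal.ofReal_prod_of_nonneg fun k _ => inv_nonneg.2 (hfactor k).le, invPartialProd]
  refine Finset.prod_congr rfl fun k _ => ?_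
  rw [ENNReal.ofReal_inv_of_pos (hfactor k), ENNReal.ofReal_sub _ (by positivity),
    ENNReal.ofReal_one, ENNReal.ofReal_inv_of_pos (by positivity),
    ENNReal.ofReal_pow (by positivity), ENNReal.ofReal_natCast]

end NormalizingProduct

section Moments

theorem tendsto_tsum_of_le_of_tendsto {ι α : Type*} {l : Filter α} {f : α → ι → ℝ≥0∞}
    {g : ι → ℝ≥0∞} (hle : ∀ a i, f a i ≤ g i) (hf : ∀ i, Tendsto (f · i) l (𝓝 (g i))) :
    Tendsto (fun a => ∑' i, f a i) l (𝓝 (∑' i, g i)) := by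
  refine tendsto_order.2 ⟨fun b hb => ?_, fun b hb =>
    .of_forall fun a => (ENNReal.tsum_le_tsum (hle a)).trans_lt hb⟩
  rw [ENNReal.tsum_eq_iSup_sum] at hb
  obtain ⟨S, hS⟩ := lt_iSup_iff.1 hb
  have hlim := tendsto_finsetSum S fun i _ => hf i
  exact (hlim.eventually_const_lt hS).mono fun a ha => ha.trans_le (ENNReal.sum_le_tsum S)

/-- The Cohen–Lenstra mass `|B|^{-u} |Aut(B)|^{-1}`, without the normalizing product. -/
noncomputable def clMass (u : ℕ) (B : Type*) [AddCommGroup B] : ℝ≥0∞ :=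
  ((Nat.card B : ℝ≥0∞) ^ u)⁻¹ / numAut B

theorem toReal_clMass_mul_clProd (p u : ℕ) (B : Type*) [AddCommGroup B] :
    (clMass u B).toReal * clProd p u = clMeasure p u B := by
  simp [clMass, clMeasure, div_eq_mul_inv]

variable {p : ℕ} [Fact p.Prime] (u : ℕ) {A : Type*} [AddCommGroup A]

theorem tsum_numSur_mul_clMass_mul_generationProb (hA : ∃ k, Nat.card A = p ^ k) (n : ℕ) :
    ∑' lam, numSur (CLGroup p lam) A * clMass u (CLGroup p lam) *
        generationProb n (CLGroup p lam) =
      ((Nat.card A : ℝ≥0∞) ^ u)⁻¹ * generationProb n A * invPartialProd p u n := by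
  have hp : p.Prime := Fact.out
  obtain ⟨k, hk⟩ := hA
  have : Finite A := Nat.finite_of_card_ne_zero (hk ▸ pow_ne_zero k hp.ne_zero)
  have (lam : Multiset ℕ+) : Finite (CLGroup p lam) := CLGroup.finite hp lam
  have (lam : Multiset ℕ+) := finite_addMonoidHom_of_free (Fin n → ℤ) (CLGroup p lam)
  have hweight (lam : Multiset ℕ+) : primePowerWeight p u (Nat.card (CLGroup p lam)) =
      ((Nat.card (CLGroup p lam) : ℝ≥0∞) ^ u)⁻¹ := by
    rw [CLGroup.card_eq_pow, primePowerWeight_pow]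
  have hbySurjection := tsum_numSur_quotient_mul_primePowerWeight (M := Fin n → ℤ) (A := A) p u
  rw [Module.finrank_fin_fun, ← mul_assoc, numSur_mul_primePowerWeight, hk, primePowerWeight_pow,
    ← hk] at hbySurjection
  rw [← hbySurjection, tsum_subgroups_eq_tsum_quotients (CLGroup p)
    (fun _ _ ⟨e⟩ => CLGroup.eq_of_addEquiv hp e)
    (g := fun lam => numSur (CLGroup p lam) A * primePowerWeight p (n + u)
      (Nat.card (CLGroup p lam)))]
  · refine tsum_congr fun lam => ?_
    rw [card_quotients_eq_numSur_div_numAut, mul_left_comm, ← ENNReal.mul_div_right_comm,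
      numSur_mul_primePowerWeight, hweight, ENNReal.mul_div_right_comm, ← mul_assoc, clMass]
  · rintro L lam ⟨e⟩
    rw [numSur_congr_left e, AddSubgroup.index, Nat.card_congr e.toEquiv]
  · intro L hL
    obtain ⟨j, hj⟩ := not_imp_comm.1 (primePowerWeight_of_notMem_powers · (n + u))
      (right_ne_zero_of_mul hL)
    exact CLGroup.exists_addEquiv hp hj.symm

theorem tsum_numSur_mul_clMass (hA : ∃ k, Nat.card A = p ^ k) :
    ∑' lam, numSur (CLGroup p lam) A * clMass u (CLGroup p lam) =
      ((Nat.card A : ℝ≥0∞) ^ u)⁻¹ * ENNReal.ofReal (clProd p u)⁻¹ := by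
  have hp : p.Prime := Fact.out
  have (lam : Multiset ℕ+) : Finite (CLGroup p lam) := CLGroup.finite hp lam
  have : Finite A := hA.elim fun k hk => Nat.finite_of_card_ne_zero (hk ▸ pow_ne_zero k hp.ne_zero)
  have hlhs : Tendsto (fun n => ∑' lam, numSur (CLGroup p lam) A * clMass u (CLGroup p lam) *
      generationProb n (CLGroup p lam)) atTop
      (𝓝 (∑' lam, numSur (CLGroup p lam) A * clMass u (CLGroup p lam))) :=
    tendsto_tsum_of_le_of_tendsto
      (fun n lam => mul_le_of_le_one_right' (generationProb_le_one n _)) fun lam => by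
        simpa using ENNReal.Tendsto.const_mul (tendsto_generationProb (CLGroup p lam))
          (.inl one_ne_zero)
  have hA0 : (Nat.card A : ℝ≥0∞) ≠ 0 := Nat.cast_ne_zero.2 Nat.card_pos.ne'
  have hrhs := ENNReal.Tendsto.mul
    (ENNReal.Tendsto.const_mul (a := ((Nat.card A : ℝ≥0∞) ^ u)⁻¹) (tendsto_generationProb A)
      (.inl one_ne_zero)) (.inr ENNReal.ofReal_ne_top)
    (tendsto_invPartialProd hp.one_lt u) (.inr (by finiteness))
  rw [mul_one] at hrhs
  simp only [tsum_numSur_mul_clMass_mul_generationProb u hA] at hlhs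
  exact tendsto_nhds_unique hlhs hrhs

end Moments

theorem cl_moments_general (p : ℕ) (hp : p.Prime) (u : ℕ)
    (A : Type*) [AddCommGroup A] (hA : ∃ n : ℕ, Nat.card A = p ^ n) :
    HasSum (fun lam : Multiset ℕ+ => (numSur (CLGroup p lam) A : ℝ) * clMeasure p u (CLGroup p lam))
      ((Nat.card A : ℝ) ^ u)⁻¹ := by
  have : Fact p.Prime := ⟨hp⟩
  have htotal := tsum_numSur_mul_clMass u hA
  have hfinite : ∑' lam, numSur (CLGroup p lam) A * clMass u (CLGroup p lam) ≠ ∞ := by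
    have hA0 : (Nat.card A : ℝ≥0∞) ≠ 0 :=
      hA.elim fun k hk => hk ▸ Nat.cast_ne_zero.2 (pow_ne_zero k hp.ne_zero)
    rw [htotal]
    finiteness
  have hclProd := clProd_pos hp.one_lt u
  have hsum := ENNReal.hasSum_toReal hfinite
  rw [← ENNReal.tsum_toReal_eq (ENNReal.ne_top_of_tsum_ne_top hfinite), htotal] at hsum
  simpa [mul_assoc, toReal_clMass_mul_clProd, hclProd.le, hclProd.ne'] using
    hsum.mul_right (clProd p u)

theorem cl_moments (p : ℕ) (hp : p.Prime) (hodd : Odd p) (u : ℕ)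
    (A : Type) [AddCommGroup A] (hA : ∃ n : ℕ, Nat.card A = p ^ n) :
    ∑' lam : Multiset ℕ+, (numSur (CLGroup p lam) A : ℝ) * clMeasure p u (CLGroup p lam)
      = ((Nat.card A : ℝ) ^ u)⁻¹ :=
  (cl_moments_general p hp u A hA).tsum_eq
end

section
/- For every integer u ≥ 0 and every finite abelian p-group K, the sum over isomorphism classes of finite abelian p-groups B of μ^0(B) · |B|^{-u} · #{(b_1,…,b_u) ∈ B^u : B/⟨b_1,…,b_u⟩ ≅ K} equals μ^u(K). (Equivalently: if B is chosen at random according to μ^0 and b_1,…,b_u are chosen uniformly and independently in B, then B/⟨b_1,…,b_u⟩ is distributed according to μ^u.) -/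
/-!
Cohen–Lenstra moments: for every integer `u ≥ 0` and every finite abelian `p`-group `A`,
the sum over isomorphism classes of finite abelian `p`-groups `B` of `|Sur(B,A)| · μ^u(B)`
equals `|A|^{-u}`.
-/

open scoped Classical

/-!
Write `K = F/R` with `F` free of rank `r`. For `α : ℤ^u → B` with `B/im α ≅ K`, lift a surjection
`F → B/im α` with kernel `R` to `β : F → B`; there are `|Aut K| (|B|/|K|)^r` such `β`, and the
pairs `(α, β)` are exactly the surjections `ℤ^u × F → B` whose kernel projects onto `R`. Weighting
by `|Aut B|⁻¹ |B|^{-(u+r)}` and summing over `B` therefore gives the sum of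
`[ℤ^u × F : L]^{-(u+r)}` over the subgroups `L` of `p`-power index that project onto `R`. By
Goursat's lemma these are pairs of a subgroup `M ≤ ℤ^u` and a homomorphism `R → ℤ^u/M`, and there
are `[ℤ^u : M]^r` such homomorphisms, so the sum is `|K|^{-(u+r)}` times the Euler factor at `p` of
`∑_M [ℤ^u : M]^{-u}`. The same count splits off one copy of `ℤ` at a time and evaluates that factor
as `∏_{i=1}^u (1 - p^{-i})⁻¹`.
-/

namespace CohenLenstra

open scoped ENNReal

/-! ### Finite abelian `p`-groups and multisets of exponents -/

section Classification

lemma exists_equiv_of_map_univ_eq {ι κ α : Type*} [Fintype ι] [Fintype κ] {f : ι → α} {g : κ → α}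
    (h : Finset.univ.val.map f = Finset.univ.val.map g) : ∃ σ : ι ≃ κ, ∀ i, g (σ i) = f i := by
  have card_fiber (a : α) : Fintype.card {i // f i = a} = Fintype.card {j // g j = a} := by
    have := congrArg (Multiset.count a) h
    simpa only [Multiset.count_map, Fintype.card_subtype, Finset.card, Finset.filter_val,
      eq_comm (a := a)] using this
  exact ⟨Equiv.ofFiberEquiv fun a => Fintype.equivOfCardEq (card_fiber a),
    Equiv.ofFiberEquiv_map _⟩

lemma nonempty_pi_addEquiv_clGroup (p : ℕ) {ι : Type*} [Fintype ι] (e : ι → ℕ+) :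
    Nonempty ((∀ i, ZMod (p ^ (e i : ℕ))) ≃+ CLGroup p (Finset.univ.val.map e)) := by
  set lam := Finset.univ.val.map e
  have map_get : Finset.univ.val.map lam.toList.get = Finset.univ.val.map e := by
    rw [Fin.univ_val_map, List.ofFn_get, Multiset.coe_toList]
  obtain ⟨σ, hσ⟩ := exists_equiv_of_map_univ_eq map_get
  exact ⟨(RingEquiv.piCongrLeft (fun i => ZMod (p ^ (e i : ℕ))) σ).toAddEquiv.symm.trans
    (AddEquiv.piCongrRight fun i => (ZMod.ringEquivCongr (by rw [hσ i])).toAddEquiv)⟩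

lemma exists_pi_addEquiv_clGroup (p : ℕ) (lam : Multiset ℕ+) :
    ∃ (n : ℕ) (e : Fin n → ℕ+), Finset.univ.val.map e = lam ∧
      Nonempty ((∀ i, ZMod (p ^ (e i : ℕ))) ≃+ CLGroup p lam) :=
  ⟨_, lam.toList.get, by rw [Fin.univ_val_map, List.ofFn_get, Multiset.coe_toList],
    ⟨AddEquiv.refl _⟩⟩

lemma exists_card_clGroup_eq_pow (p : ℕ) (lam : Multiset ℕ+) :
    ∃ k, Nat.card (CLGroup p lam) = p ^ k := by
  obtain ⟨n, e, -, ⟨f⟩⟩ := exists_pi_addEquiv_clGroup p lam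
  exact ⟨∑ i, (e i : ℕ), by
    simp only [← Nat.card_congr f.toEquiv, Nat.card_pi, Nat.card_zmod, Finset.prod_pow_eq_pow_sum]⟩

variable {p : ℕ}

lemma finite_clGroup (hp : p.Prime) (lam : Multiset ℕ+) : Finite (CLGroup p lam) := by
  obtain ⟨k, hk⟩ := exists_card_clGroup_eq_pow p lam
  exact Nat.finite_of_card_ne_zero (hk ▸ pow_ne_zero k hp.ne_zero)

lemma exists_addEquiv_clGroup (hp : p.Prime) {G : Type*} [AddCommGroup G] {k : ℕ}
    (hG : Nat.card G = p ^ k) : ∃ lam, Nonempty (G ≃+ CLGroup p lam) := by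
  have : Finite G := Nat.finite_of_card_ne_zero (hG ▸ pow_ne_zero k hp.ne_zero)
  obtain ⟨ι, _, n, one_lt_n, ⟨f⟩⟩ := AddCommGroup.equiv_directSum_zmod_of_finite' G
  let f' : G ≃+ ∀ i, ZMod (n i) := f.trans (DirectSum.addEquivProd _)
  have prod_n : ∏ i, n i = p ^ k := by
    simp only [← hG, Nat.card_congr f'.toEquiv, Nat.card_pi, Nat.card_zmod]
  have exists_exponent (i : ι) : ∃ e : ℕ+, n i = p ^ (e : ℕ) := by
    obtain ⟨m, -, hm⟩ :=
      (Nat.dvd_prime_pow hp).1 (prod_n ▸ Finset.dvd_prod_of_mem n (Finset.mem_univ i))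
    have m_ne_zero : m ≠ 0 := by
      rintro rfl
      exact (one_lt_n i).ne' hm
    exact ⟨⟨m, Nat.pos_of_ne_zero m_ne_zero⟩, hm⟩
  choose e he using exists_exponent
  obtain ⟨g⟩ := nonempty_pi_addEquiv_clGroup p e
  exact ⟨_, ⟨f'.trans ((AddEquiv.piCongrRight fun i =>
    (ZMod.ringEquivCongr (he i)).toAddEquiv).trans g)⟩⟩

lemma card_nsmul_eq_zero_congr {G H : Type*} [AddCommGroup G] [AddCommGroup H] (f : G ≃+ H)
    (n : ℕ) : Nat.card {x : G // n • x = 0} = Nat.card {x : H // n • x = 0} :=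
  Nat.card_congr <| f.toEquiv.subtypeEquiv fun x => by
    rw [AddEquiv.toEquiv_eq_coe, EquivLike.coe_coe, ← map_nsmul, map_eq_zero_iff f f.injective]

lemma card_zmod_nsmul_eq_zero (hp : p.Prime) (a k : ℕ) :
    Nat.card {x : ZMod (p ^ a) // p ^ k • x = 0} = p ^ min a k := by
  have : NeZero (p ^ a) := ⟨pow_ne_zero a hp.ne_zero⟩
  have card_ker := IsAddCyclic.card_nsmulAddMonoidHom_ker (ZMod (p ^ a)) (p ^ k)
  rw [Nat.card_zmod] at card_ker
  refine card_ker.trans ?_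
  rcases le_total a k with h | h
  · rw [min_eq_left h, Nat.gcd_eq_left (pow_dvd_pow p h)]
  · rw [min_eq_right h, Nat.gcd_eq_right (pow_dvd_pow p h)]

lemma card_clGroup_nsmul_eq_zero (hp : p.Prime) (lam : Multiset ℕ+) (k : ℕ) :
    Nat.card {x : CLGroup p lam // p ^ k • x = 0} =
      p ^ (lam.map fun a : ℕ+ => min (a : ℕ) k).sum := by
  obtain ⟨n, e, rfl, ⟨f⟩⟩ := exists_pi_addEquiv_clGroup p lam
  rw [← card_nsmul_eq_zero_congr f, Multiset.map_map]
  calc Nat.card {x : ∀ i, ZMod (p ^ (e i : ℕ)) // p ^ k • x = 0}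
      = Nat.card (∀ i, {x : ZMod (p ^ (e i : ℕ)) // p ^ k • x = 0}) :=
        Nat.card_congr <| (Equiv.subtypeEquivRight fun _ => funext_iff).trans
          (Equiv.subtypePiEquivPi (p := fun i (x : ZMod (p ^ (e i : ℕ))) => p ^ k • x = 0))
    _ = p ^ ∑ i, min (e i : ℕ) k := by
        simp only [Nat.card_pi, card_zmod_nsmul_eq_zero hp, Finset.prod_pow_eq_pow_sum]

-- The multiplicity of `a` is minus the second difference at `a` of `k ↦ ∑ min b k`.
lemma two_mul_sum_map_min (s : Multiset ℕ+) (a : ℕ+) :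
    2 * (s.map fun b : ℕ+ => min (b : ℕ) a).sum =
      (s.map fun b : ℕ+ => min (b : ℕ) (a - 1)).sum +
        (s.map fun b : ℕ+ => min (b : ℕ) (a + 1)).sum + s.count a := by
  induction s using Multiset.induction_on with
  | empty => simp
  | cons b s ih =>
    have second_difference : 2 * min (b : ℕ) a =
        min (b : ℕ) (a - 1) + min (b : ℕ) (a + 1) + if a = b then 1 else 0 := by
      have := a.pos
      have := b.pos
      simp only [← PNat.coe_inj]
      split_ifs <;> omega
    simp only [Multiset.map_cons, Multiset.sum_cons, Multiset.count_cons]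
    omega

lemma eq_of_clGroup_addEquiv (hp : p.Prime) {lam mu : Multiset ℕ+}
    (f : CLGroup p lam ≃+ CLGroup p mu) : lam = mu := by
  have sum_min_eq (k : ℕ) : (lam.map fun a : ℕ+ => min (a : ℕ) k).sum =
      (mu.map fun a : ℕ+ => min (a : ℕ) k).sum :=
    Nat.pow_right_injective hp.two_le <| by
      simpa only [card_clGroup_nsmul_eq_zero hp] using card_nsmul_eq_zero_congr f (p ^ k)
  ext a
  have := two_mul_sum_map_min lam a
  rw [sum_min_eq, sum_min_eq, sum_min_eq, two_mul_sum_map_min mu a] at this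
  omega

end Classification

/-! ### Subgroups of a product -/

section Product

variable {A F : Type*} [AddCommGroup A] [AddCommGroup F]

/-- The graph in `A × F` of a homomorphism `h` from a subgroup `R` of `F` to a quotient `A ⧸ M`.
It encodes Goursat's description of the subgroups of `A × F`: each of them is such a graph, for a
unique triple `(M, R, h)`. -/
def graphSubgroup (M : AddSubgroup A) {R : AddSubgroup F} (h : R →+ A ⧸ M) :
    AddSubgroup (A × F) where
  carrier := {x | ∃ r : R, (r : F) = x.2 ∧ h r = (x.1 : A ⧸ M)}
  zero_mem' := ⟨0, rfl, map_zero h⟩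
  add_mem' := by
    rintro x y ⟨r, hr, hx⟩ ⟨s, hs, hy⟩
    exact ⟨r + s, congrArg₂ (· + ·) hr hs, by rw [map_add, hx, hy]; rfl⟩
  neg_mem' := by
    rintro x ⟨r, hr, hx⟩
    exact ⟨-r, congrArg (-·) hr, by rw [map_neg, hx]; rfl⟩

lemma mem_graphSubgroup {M : AddSubgroup A} {R : AddSubgroup F} {h : R →+ A ⧸ M} {x : A × F} :
    x ∈ graphSubgroup M h ↔ ∃ r : R, (r : F) = x.2 ∧ h r = (x.1 : A ⧸ M) :=
  Iff.rfl

lemma comap_inl_graphSubgroup (M : AddSubgroup A) {R : AddSubgroup F} (h : R →+ A ⧸ M) :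
    (graphSubgroup M h).comap (AddMonoidHom.inl A F) = M := by
  ext a
  rw [AddSubgroup.mem_comap, mem_graphSubgroup, ← QuotientAddGroup.eq_zero_iff]
  constructor
  · rintro ⟨r, hr, ha⟩
    obtain rfl : r = 0 := Subtype.ext hr
    exact ha.symm.trans (map_zero h)
  · exact fun ha => ⟨0, rfl, (map_zero h).trans ha.symm⟩

lemma map_snd_graphSubgroup (M : AddSubgroup A) {R : AddSubgroup F} (h : R →+ A ⧸ M) :
    (graphSubgroup M h).map (AddMonoidHom.snd A F) = R := by
  ext f
  constructor
  · rintro ⟨⟨a, _⟩, ⟨r, rfl, -⟩, rfl⟩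
    exact r.2
  · intro hf
    obtain ⟨a, ha⟩ := QuotientAddGroup.mk_surjective (h ⟨f, hf⟩)
    exact ⟨(a, f), ⟨⟨f, hf⟩, rfl, ha.symm⟩, rfl⟩

lemma graphSubgroup_injective (M : AddSubgroup A) (R : AddSubgroup F) :
    Function.Injective fun h : R →+ A ⧸ M => graphSubgroup M h := by
  intro h h' graph_eq
  ext r
  obtain ⟨a, ha⟩ := QuotientAddGroup.mk_surjective (h r)
  have mem_graph : (a, (r : F)) ∈ graphSubgroup M h := ⟨r, rfl, ha.symm⟩
  obtain ⟨s, hs, hs'⟩ := graph_eq.le mem_graph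
  obtain rfl : s = r := Subtype.ext hs
  exact ha.symm.trans hs'.symm

lemma exists_graphSubgroup_eq (L : AddSubgroup (A × F)) :
    ∃ h : L.map (AddMonoidHom.snd A F) →+ A ⧸ L.comap (AddMonoidHom.inl A F),
      graphSubgroup (L.comap (AddMonoidHom.inl A F)) h = L := by
  let s := (AddMonoidHom.snd A F).addSubgroupMap L
  have s_surjective : Function.Surjective s := (AddMonoidHom.snd A F).addSubgroupMap_surjective L
  let t : L →+ A ⧸ L.comap (AddMonoidHom.inl A F) :=
    (QuotientAddGroup.mk' _).comp ((AddMonoidHom.fst A F).comp L.subtype)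
  have ker_le : s.ker ≤ t.ker := by
    rintro ⟨⟨a, f⟩, hx⟩ hf
    obtain rfl : f = 0 := congrArg Subtype.val hf
    exact (QuotientAddGroup.eq_zero_iff a).2 hx
  let h := s.liftOfSurjective s_surjective ⟨t, ker_le⟩
  have h_apply (x : L) : h (s x) = t x :=
    s.liftOfRightInverse_comp_apply _ (Function.rightInverse_surjInv s_surjective) ⟨t, ker_le⟩ x
  refine ⟨h, ?_⟩
  ext ⟨a, f⟩
  rw [mem_graphSubgroup]
  constructor
  · rintro ⟨⟨_, ⟨a', f'⟩, hx', rfl⟩, rfl, ha⟩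
    have mk_eq : (a' : A ⧸ L.comap (AddMonoidHom.inl A F)) = a := (h_apply ⟨_, hx'⟩).symm.trans ha
    have sub_mem : ((-a' + a, 0) : A × F) ∈ L := QuotientAddGroup.eq.1 mk_eq
    simpa using L.add_mem hx' sub_mem
  · exact fun hx => ⟨s ⟨_, hx⟩, rfl, h_apply ⟨_, hx⟩⟩

/-- Goursat's bijection between the subgroups of `A × F` projecting onto `R` and the
homomorphisms from `R` to the quotients of `A`. -/
noncomputable def subgroupsOverEquiv (A : Type*) [AddCommGroup A] (R : AddSubgroup F) :
    (Σ M : AddSubgroup A, R →+ A ⧸ M) ≃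
      {L : AddSubgroup (A × F) // L.map (AddMonoidHom.snd A F) = R} :=
  Equiv.ofBijective (fun x => ⟨graphSubgroup x.1 x.2, map_snd_graphSubgroup x.1 x.2⟩) <| by
    constructor
    · rintro ⟨M, h⟩ ⟨M', h'⟩ heq
      have graph_eq : graphSubgroup M h = graphSubgroup M' h' := congrArg Subtype.val heq
      obtain rfl : M = M' := by
        rw [← comap_inl_graphSubgroup M h, graph_eq, comap_inl_graphSubgroup]
      rw [graphSubgroup_injective M R graph_eq]
    · rintro ⟨L, rfl⟩
      obtain ⟨h, hh⟩ := exists_graphSubgroup_eq L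
      exact ⟨⟨_, h⟩, Subtype.ext hh⟩

lemma index_eq_relIndex_ker_mul_index_map {G H : Type*} [AddCommGroup G] [AddCommGroup H]
    (L : AddSubgroup G) {g : G →+ H} (hg : Function.Surjective g) :
    L.index = L.relIndex g.ker * (L.map g).index := by
  rw [← AddSubgroup.relIndex_mul_index (le_sup_left : L ≤ L ⊔ g.ker), sup_comm,
    AddSubgroup.relIndex_sup_right, sup_comm, ← AddSubgroup.comap_map_eq,
    AddSubgroup.index_comap_of_surjective _ hg]

lemma index_eq_index_comap_inl_mul_index_map_snd (L : AddSubgroup (A × F)) :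
    L.index = (L.comap (AddMonoidHom.inl A F)).index * (L.map (AddMonoidHom.snd A F)).index := by
  have range_inl : (AddMonoidHom.inl A F).range = (AddMonoidHom.snd A F).ker := by
    ext ⟨a, f⟩
    simp [AddMonoidHom.mem_range, AddSubgroup.mem_prod, eq_comm]
  rw [AddSubgroup.index_comap, range_inl,
    ← index_eq_relIndex_ker_mul_index_map L (g := AddMonoidHom.snd A F) Prod.snd_surjective]

lemma index_subgroupsOverEquiv {R : AddSubgroup F} (x : Σ M : AddSubgroup A, R →+ A ⧸ M) :
    (subgroupsOverEquiv A R x).1.index = x.1.index * R.index := by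
  rw [index_eq_index_comap_inl_mul_index_map_snd, (subgroupsOverEquiv A R x).2]
  exact congrArg (·.index * R.index) (comap_inl_graphSubgroup x.1 x.2)

end Product

/-! ### The subgroup zeta function -/

section FreeHom

lemma card_hom_eq_pow_finrank (F Q : Type*) [AddCommGroup F] [Module.Free ℤ F]
    [Module.Finite ℤ F] [AddCommGroup Q] :
    Nat.card (F →+ Q) = Nat.card Q ^ Module.finrank ℤ F := by
  let b := Module.Free.chooseBasis ℤ F
  rw [Nat.card_congr ((addMonoidHomLequivInt ℤ).toEquiv.trans (b.constr ℤ).symm.toEquiv),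
    Nat.card_fun, Nat.card_eq_fintype_card (α := Module.Free.ChooseBasisIndex ℤ F),
    Module.finrank_eq_card_chooseBasisIndex]

variable {F : Type*} [AddCommGroup F] [Module.Free ℤ F] [Module.Finite ℤ F]

lemma finrank_of_index_ne_zero {R : AddSubgroup F} (hR : R.index ≠ 0) :
    Module.finrank ℤ R = Module.finrank ℤ F := by
  have : Finite (F ⧸ AddSubgroup.toIntSubmodule R) := Nat.finite_of_card_ne_zero hR
  exact (AddSubgroup.toIntSubmodule R).finiteQuotient_iff.1 this

lemma card_hom_of_index_ne_zero {R : AddSubgroup F} (hR : R.index ≠ 0) (Q : Type*)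
    [AddCommGroup Q] : Nat.card (R →+ Q) = Nat.card Q ^ Module.finrank ℤ F := by
  have : Module.Free ℤ R := inferInstanceAs (Module.Free ℤ (AddSubgroup.toIntSubmodule R))
  have : Module.Finite ℤ R := inferInstanceAs (Module.Finite ℤ (AddSubgroup.toIntSubmodule R))
  rw [card_hom_eq_pow_finrank, finrank_of_index_ne_zero hR]

end FreeHom

section Zeta

/-- The `p`-part of `n ↦ n⁻ˢ`: the coefficients of the Euler factor at `p` of a Dirichlet series.
Powers of `p` keep their weight and every other `n`, in particular the index `0` of a subgroup of
infinite index, gets weight `0`. -/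
noncomputable def primaryWeight (p s n : ℕ) : ℝ≥0∞ :=
  if ∃ k, n = p ^ k then ((n : ℝ≥0∞) ^ s)⁻¹ else 0

/-- The Euler factor at `p` of the subgroup zeta function of `A`, that is, the sum of `[A : M]⁻ˢ`
over the subgroups `M` of `A` whose index is a power of `p`. -/
noncomputable def subgroupZeta (p s : ℕ) (A : Type*) [AddCommGroup A] : ℝ≥0∞ :=
  ∑' M : AddSubgroup A, primaryWeight p s M.index

variable {p : ℕ}

lemma primaryWeight_pow (p s k : ℕ) : primaryWeight p s (p ^ k) = ((p : ℝ≥0∞) ^ s)⁻¹ ^ k := by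
  rw [primaryWeight, if_pos ⟨k, rfl⟩, Nat.cast_pow, pow_right_comm, ENNReal.inv_pow]

lemma primaryWeight_zero (hp : p.Prime) (s : ℕ) : primaryWeight p s 0 = 0 :=
  if_neg fun ⟨k, hk⟩ => pow_ne_zero k hp.ne_zero hk.symm

lemma primaryWeight_mul (hp : p.Prime) (s m n : ℕ) :
    primaryWeight p s (m * n) = primaryWeight p s m * primaryWeight p s n := by
  by_cases h : ∃ k, m * n = p ^ k
  · obtain ⟨k, hk⟩ := h
    obtain ⟨i, -, rfl⟩ := (Nat.dvd_prime_pow hp).1 (Dvd.intro n hk)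
    obtain ⟨j, -, rfl⟩ := (Nat.dvd_prime_pow hp).1 (Dvd.intro_left _ hk)
    simp only [← pow_add, primaryWeight_pow]
  · rw [primaryWeight, if_neg h, eq_comm, mul_eq_zero, or_iff_not_imp_left]
    intro hm
    obtain ⟨i, rfl⟩ := (ite_ne_right_iff.1 hm).1
    refine if_neg ?_
    rintro ⟨j, rfl⟩
    exact h ⟨i + j, (pow_add p i j).symm⟩

lemma primaryWeight_add_mul_pow (hp : p.Prime) (s r n : ℕ) :
    primaryWeight p (s + r) n * (n : ℝ≥0∞) ^ r = primaryWeight p s n := by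
  by_cases h : ∃ k, n = p ^ k
  · rw [primaryWeight, primaryWeight, if_pos h, if_pos h]
    obtain ⟨k, rfl⟩ := h
    have pow_ne_zero' : ((p ^ k : ℕ) : ℝ≥0∞) ^ r ≠ 0 :=
      pow_ne_zero r (Nat.cast_ne_zero.2 (pow_ne_zero k hp.ne_zero))
    rw [pow_add, ENNReal.mul_inv (.inr (by finiteness)) (.inr pow_ne_zero'), mul_assoc,
      ENNReal.inv_mul_cancel pow_ne_zero' (by finiteness), mul_one]
  · rw [primaryWeight, primaryWeight, if_neg h, if_neg h, zero_mul]

lemma subgroupZeta_congr (p s : ℕ) {A B : Type*} [AddCommGroup A] [AddCommGroup B] (e : A ≃+ B) :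
    subgroupZeta p s A = subgroupZeta p s B := by
  rw [subgroupZeta, subgroupZeta, ← e.mapAddSubgroup.toEquiv.tsum_eq]
  exact tsum_congr fun M => congrArg _ (AddSubgroup.index_map_equiv M e).symm

lemma subgroupZeta_of_subsingleton (p s : ℕ) (A : Type*) [AddCommGroup A] [Subsingleton A] :
    subgroupZeta p s A = 1 := by
  rw [subgroupZeta, tsum_eq_single ⊤ fun M hM => absurd (Subsingleton.elim M ⊤) hM,
    AddSubgroup.index_top, ← pow_zero p, primaryWeight_pow, pow_zero]

lemma subgroupZeta_int (hp : p.Prime) (s : ℕ) :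
    subgroupZeta p s ℤ = (1 - ((p : ℝ≥0∞) ^ s)⁻¹)⁻¹ := by
  have index_eq (k : ℕ) : (AddSubgroup.zmultiples ((p ^ k : ℕ) : ℤ)).index = p ^ k := by
    rw [Int.index_zmultiples, Int.natAbs_natCast]
  have zmultiples_injective :
      Function.Injective fun k : ℕ => AddSubgroup.zmultiples ((p ^ k : ℕ) : ℤ) := fun k l h =>
    Nat.pow_right_injective hp.two_le <| by
      simpa only [index_eq] using congrArg AddSubgroup.index h
  rw [← ENNReal.tsum_geometric, subgroupZeta, ← zmultiples_injective.tsum_eq]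
  · exact tsum_congr fun k => by rw [index_eq, primaryWeight_pow]
  · intro M hM
    obtain ⟨k, hk⟩ := (ite_ne_right_iff.1 hM).1
    obtain ⟨a, rfl⟩ := Int.subgroup_cyclic M
    rw [← AddSubgroup.zmultiples_eq_closure] at hk ⊢
    rw [Int.index_zmultiples] at hk
    exact ⟨k, by simp only [← hk, Int.zmultiples_natAbs]⟩

variable {F : Type*} [AddCommGroup F] [Module.Free ℤ F] [Module.Finite ℤ F]

lemma tsum_hom_primaryWeight (hp : p.Prime) (s : ℕ) {A : Type*} [AddCommGroup A]
    (M : AddSubgroup A) (R : AddSubgroup F) :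
    ∑' _ : R →+ A ⧸ M, primaryWeight p (s + Module.finrank ℤ F) (M.index * R.index) =
      primaryWeight p s M.index * primaryWeight p (s + Module.finrank ℤ F) R.index := by
  rcases eq_or_ne R.index 0 with hR | hR
  · simp [hR, primaryWeight_zero hp]
  rcases eq_or_ne M.index 0 with hM | hM
  · simp [hM, primaryWeight_zero hp]
  have card_hom : Nat.card (R →+ A ⧸ M) = M.index ^ Module.finrank ℤ F :=
    card_hom_of_index_ne_zero hR _
  have : Finite (R →+ A ⧸ M) := Nat.finite_of_card_ne_zero (card_hom ▸ pow_ne_zero _ hM)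
  rw [ENNReal.tsum_const, ENat.card_eq_coe_natCard, card_hom, primaryWeight_mul hp,
    ← primaryWeight_add_mul_pow hp s (Module.finrank ℤ F) M.index]
  push_cast
  ring

lemma tsum_subgroupsOver_primaryWeight (hp : p.Prime) (s : ℕ) (A : Type*) [AddCommGroup A]
    (R : AddSubgroup F) :
    ∑' L : {L : AddSubgroup (A × F) // L.map (AddMonoidHom.snd A F) = R},
        primaryWeight p (s + Module.finrank ℤ F) L.1.index =
      subgroupZeta p s A * primaryWeight p (s + Module.finrank ℤ F) R.index := by
  simp only [← (subgroupsOverEquiv A R).tsum_eq, index_subgroupsOverEquiv, ENNReal.tsum_sigma',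
    tsum_hom_primaryWeight hp, ENNReal.tsum_mul_right, subgroupZeta]

lemma subgroupZeta_prod (hp : p.Prime) (s : ℕ) (A F : Type*) [AddCommGroup A] [AddCommGroup F]
    [Module.Free ℤ F] [Module.Finite ℤ F] :
    subgroupZeta p (s + Module.finrank ℤ F) (A × F) =
      subgroupZeta p s A * subgroupZeta p (s + Module.finrank ℤ F) F := by
  rw [subgroupZeta,
    ← (Equiv.sigmaFiberEquiv fun L : AddSubgroup (A × F) => L.map (.snd A F)).tsum_eq,
    ENNReal.tsum_sigma', subgroupZeta.eq_1 p (s + Module.finrank ℤ F) F, ← ENNReal.tsum_mul_left]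
  exact tsum_congr fun R => tsum_subgroupsOver_primaryWeight hp s A R

lemma subgroupZeta_fin_fun_int (hp : p.Prime) (s u : ℕ) :
    subgroupZeta p (s + u) (Fin u → ℤ) =
      ∏ i ∈ Finset.range u, (1 - ((p : ℝ≥0∞) ^ (s + i + 1))⁻¹)⁻¹ := by
  induction u with
  | zero => rw [subgroupZeta_of_subsingleton, Finset.prod_range_zero]
  | succ u ih =>
    have split_last := subgroupZeta_prod hp (s + u) (Fin u → ℤ) ℤ
    rw [Module.finrank_self, ih, subgroupZeta_int hp, ← Finset.prod_range_succ] at split_last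
    rw [← split_last]
    exact subgroupZeta_congr p _ <|
      (Fin.consLinearEquiv ℤ fun _ : Fin (u + 1) => ℤ).toAddEquiv.symm.trans AddEquiv.prodComm

end Zeta

/-! ### Counting surjections -/

section Surjections

variable {G B : Type*} [AddCommGroup G] [AddCommGroup B]

lemma card_addEquiv_eq_numAut (e : G ≃+ B) : Nat.card (G ≃+ B) = numAut B :=
  Nat.card_congr
    { toFun := e.symm.trans
      invFun := e.trans
      left_inv := fun f => by ext; simp
      right_inv := fun f => by ext; simp }

lemma numAut_congr (e : G ≃+ B) : numAut G = numAut B :=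
  Nat.card_congr (AddAut.congr e).toEquiv

lemma numAut_ne_zero (B : Type*) [AddCommGroup B] [Finite B] : numAut B ≠ 0 :=
  Nat.card_pos.ne'

/-- The first isomorphism theorem as a bijection: isomorphisms `G ⧸ L ≃+ B` are the same as
surjections `G →+ B` with kernel `L`. -/
noncomputable def quotientAddEquivEquiv (L : AddSubgroup G) (B : Type*) [AddCommGroup B] :
    ((G ⧸ L) ≃+ B) ≃ {ψ : G →+ B // Function.Surjective ψ ∧ ψ.ker = L} :=
  Equiv.ofBijective
    (fun f => ⟨f.toAddMonoidHom.comp (QuotientAddGroup.mk' L),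
      f.surjective.comp (QuotientAddGroup.mk'_surjective L), by
        ext x
        simp⟩) <| by
    constructor
    · intro f g h
      exact AddEquiv.toAddMonoidHom_injective <|
        (AddMonoidHom.cancel_right (QuotientAddGroup.mk'_surjective L)).1 (congrArg Subtype.val h)
    · rintro ⟨ψ, ψ_surjective, rfl⟩
      exact ⟨QuotientAddGroup.quotientKerEquivOfSurjective ψ ψ_surjective, rfl⟩

lemma card_surjective_ker_eq (L : AddSubgroup G) (B : Type*) [AddCommGroup B] :
    Nat.card {ψ : G →+ B // Function.Surjective ψ ∧ ψ.ker = L} =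
      if Nonempty ((G ⧸ L) ≃+ B) then numAut B else 0 := by
  rw [← Nat.card_congr (quotientAddEquivEquiv L B)]
  split_ifs with h
  · exact card_addEquiv_eq_numAut h.some
  · rw [not_nonempty_iff] at h
    exact Nat.card_of_isEmpty

lemma finite_addMonoidHom (G B : Type*) [AddCommGroup G] [Module.Finite ℤ G] [AddCommGroup B]
    [Finite B] : Finite (G →+ B) := by
  obtain ⟨r, f, hf⟩ := Module.Finite.exists_fin' ℤ G
  have : Finite ((Fin r → ℤ) →+ B) := Nat.finite_of_card_ne_zero <| by
    rw [card_hom_eq_pow_finrank]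
    exact pow_ne_zero _ Nat.card_pos.ne'
  exact Finite.of_injective (fun ψ : G →+ B => ψ.comp f.toAddMonoidHom) fun _ _ =>
    (AddMonoidHom.cancel_right hf).1

lemma card_surjective_and_ker [Module.Finite ℤ G] [Finite B] (P : AddSubgroup G → Prop) :
    (Nat.card {ψ : G →+ B // Function.Surjective ψ ∧ P ψ.ker} : ℝ≥0∞) =
      numAut B * ∑' L : {L // P L}, if Nonempty ((G ⧸ L.1) ≃+ B) then 1 else 0 := by
  have := finite_addMonoidHom G B
  let e : (Σ L : {L // P L}, {ψ : G →+ B // Function.Surjective ψ ∧ ψ.ker = L.1}) ≃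
      {ψ : G →+ B // Function.Surjective ψ ∧ P ψ.ker} :=
    { toFun := fun x => ⟨x.2, x.2.2.1, x.2.2.2.symm ▸ x.1.2⟩
      invFun := fun ψ => ⟨⟨ψ.1.ker, ψ.2.2⟩, ψ, ψ.2.1, rfl⟩
      left_inv := by
        rintro ⟨⟨L, hL⟩, ψ, hψ, hker⟩
        obtain rfl : ψ.ker = L := hker
        rfl
      right_inv := fun _ => rfl }
  rw [← ENat.toENNReal_coe, ← ENat.card_eq_coe_natCard, ← ENNReal.tsum_one, ← e.tsum_eq,
    ENNReal.tsum_sigma', ← ENNReal.tsum_mul_left]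
  refine tsum_congr fun L => ?_
  rw [ENNReal.tsum_one, ENat.card_eq_coe_natCard, card_surjective_ker_eq]
  split_ifs <;> simp

end Surjections

section SumOverGroups

variable {p : ℕ}

lemma tsum_clGroup_addEquiv (hp : p.Prime) (s : ℕ) (Q : Type*) [AddCommGroup Q] :
    ∑' lam, (if Nonempty (Q ≃+ CLGroup p lam) then
      ((Nat.card (CLGroup p lam) : ℝ≥0∞) ^ s)⁻¹ else 0) = primaryWeight p s (Nat.card Q) := by
  by_cases h : ∃ k, Nat.card Q = p ^ k
  · obtain ⟨lam, ⟨f⟩⟩ := exists_addEquiv_clGroup hp h.choose_spec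
    rw [tsum_eq_single lam, if_pos ⟨f⟩, ← Nat.card_congr f.toEquiv, primaryWeight, if_pos h]
    exact fun mu hmu => if_neg fun ⟨g⟩ => hmu (eq_of_clGroup_addEquiv hp (g.symm.trans f))
  · rw [primaryWeight, if_neg h, ENNReal.tsum_eq_zero]
    refine fun lam => if_neg fun ⟨f⟩ => h ?_
    rw [Nat.card_congr f.toEquiv]
    exact exists_card_clGroup_eq_pow p lam

lemma tsum_clGroup_card_surjective (hp : p.Prime) (s : ℕ) {G : Type*} [AddCommGroup G]
    [Module.Finite ℤ G] (P : AddSubgroup G → Prop) :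
    ∑' lam, (numAut (CLGroup p lam) : ℝ≥0∞)⁻¹ * ((Nat.card (CLGroup p lam) : ℝ≥0∞) ^ s)⁻¹ *
        Nat.card {ψ : G →+ CLGroup p lam // Function.Surjective ψ ∧ P ψ.ker} =
      ∑' L : {L // P L}, primaryWeight p s L.1.index := by
  calc _ = ∑' lam, ∑' L : {L // P L}, if Nonempty ((G ⧸ L.1) ≃+ CLGroup p lam) then
        ((Nat.card (CLGroup p lam) : ℝ≥0∞) ^ s)⁻¹ else 0 := tsum_congr fun lam => by
        have := finite_clGroup hp lam
        have numAut_cancel : (numAut (CLGroup p lam) : ℝ≥0∞)⁻¹ * numAut (CLGroup p lam) = 1 :=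
          ENNReal.inv_mul_cancel (Nat.cast_ne_zero.2 (numAut_ne_zero _)) (by finiteness)
        rw [card_surjective_and_ker, mul_mul_mul_comm, numAut_cancel, one_mul,
          ← ENNReal.tsum_mul_left]
        simp only [mul_ite, mul_one, mul_zero]
    _ = ∑' L : {L // P L}, primaryWeight p s L.1.index := by
        rw [ENNReal.tsum_comm]
        exact tsum_congr fun L => tsum_clGroup_addEquiv hp s (G ⧸ L.1)

end SumOverGroups

section Extension

variable {A F B K : Type*} [AddCommGroup A] [AddCommGroup F] [AddCommGroup B] [AddCommGroup K]

lemma card_comp_surjective_mul_card {g : A →+ B} (hg : Function.Surjective g) (P : B → Prop) :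
    Nat.card {x // P (g x)} * Nat.card B = Nat.card {y // P y} * Nat.card A := by
  let e : {x // P (g x)} ≃ {y // P y} × g.ker :=
    (Equiv.sigmaSubtypeFiberEquivSubtype g fun _ => Iff.rfl).symm.trans <|
      (Equiv.sigmaCongrRight fun y : {y // P y} =>
        AddMonoidHom.fiberEquivKerOfSurjective hg y.1).trans (Equiv.sigmaEquivProd _ _)
  rw [Nat.card_congr e, Nat.card_prod, g.ker.card_eq_card_quotient_mul_card_addSubgroup,
    Nat.card_congr (QuotientAddGroup.quotientKerEquivOfSurjective g hg).toEquiv]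
  ring

lemma surjective_coprod_iff (α : A →+ B) (β : F →+ B) :
    Function.Surjective (α.coprod β) ↔
      Function.Surjective ((QuotientAddGroup.mk' α.range).comp β) := by
  constructor
  · intro h q
    obtain ⟨y, rfl⟩ := QuotientAddGroup.mk'_surjective _ q
    obtain ⟨⟨a, f⟩, rfl⟩ := h y
    exact ⟨f, QuotientAddGroup.eq.2 ⟨a, by simp [add_comm]⟩⟩
  · intro h y
    obtain ⟨f, hf⟩ := h (y : B ⧸ α.range)
    obtain ⟨a, ha⟩ := QuotientAddGroup.eq.1 hf
    exact ⟨(a, f), by simp [ha]⟩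

lemma map_snd_ker_coprod (α : A →+ B) (β : F →+ B) :
    (α.coprod β).ker.map (AddMonoidHom.snd A F) =
      ((QuotientAddGroup.mk' α.range).comp β).ker := by
  ext f
  constructor
  · rintro ⟨⟨a, f⟩, h, rfl⟩
    have add_eq_zero : α a + β f = 0 := h
    exact (QuotientAddGroup.eq_zero_iff _).2
      ⟨-a, by rw [map_neg, ← eq_neg_of_add_eq_zero_right add_eq_zero]; rfl⟩
  · intro h
    obtain ⟨a, ha⟩ := (QuotientAddGroup.eq_zero_iff (β f)).1 h
    exact ⟨(-a, f), by simp [AddMonoidHom.mem_ker, ha], rfl⟩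

/-- The universal property of the direct sum `A × F`. -/
def coprodEquiv (A F B : Type*) [AddCommGroup A] [AddCommGroup F] [AddCommGroup B] :
    (A →+ B) × (F →+ B) ≃ (A × F →+ B) where
  toFun x := x.1.coprod x.2
  invFun ψ := (ψ.comp (.inl A F), ψ.comp (.inr A F))
  left_inv _ := Prod.ext (AddMonoidHom.coprod_comp_inl _ _) (AddMonoidHom.coprod_comp_inr _ _)
  right_inv := AddMonoidHom.coprod_unique

lemma card_surjective_map_ker_eq_sum [Fintype (A →+ B)] [Finite (F →+ B)] (R : AddSubgroup F) :
    Nat.card {ψ : A × F →+ B //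
        Function.Surjective ψ ∧ ψ.ker.map (AddMonoidHom.snd A F) = R} =
      ∑ α : A →+ B, Nat.card {β : F →+ B //
        Function.Surjective ((QuotientAddGroup.mk' α.range).comp β) ∧
          ((QuotientAddGroup.mk' α.range).comp β).ker = R} := by
  rw [← Nat.card_sigma]
  refine Nat.card_congr <| ((coprodEquiv A F B).subtypeEquiv fun x => ?_).symm.trans <|
    Equiv.subtypeProdEquivSigmaSubtype fun (α : A →+ B) (β : F →+ B) =>
      Function.Surjective ((QuotientAddGroup.mk' α.range).comp β) ∧
        ((QuotientAddGroup.mk' α.range).comp β).ker = R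
  rw [← surjective_coprod_iff, ← map_snd_ker_coprod]
  rfl

variable [Module.Free ℤ F] [Module.Finite ℤ F]

lemma card_hom_comp_mul_card_pow {Q : Type*} [AddCommGroup Q] {g : B →+ Q}
    (hg : Function.Surjective g) (P : (F →+ Q) → Prop) :
    Nat.card {β : F →+ B // P (g.comp β)} * Nat.card Q ^ Module.finrank ℤ F =
      Nat.card {γ // P γ} * Nat.card B ^ Module.finrank ℤ F := by
  have compHom_surjective : Function.Surjective (AddMonoidHom.compHom g : (F →+ B) →+ F →+ Q) :=
    fun γ => by
      obtain ⟨β, hβ⟩ :=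
        Module.projective_lifting_property g.toIntLinearMap γ.toIntLinearMap hg
      exact ⟨β.toAddMonoidHom, by ext x; exact DFunLike.congr_fun hβ x⟩
  rw [← card_hom_eq_pow_finrank, ← card_hom_eq_pow_finrank]
  exact card_comp_surjective_mul_card compHom_surjective P

lemma card_surjective_mk_comp_mul_card_pow [Finite B] {R : AddSubgroup F} (e : (F ⧸ R) ≃+ K)
    (N : AddSubgroup B) :
    Nat.card {β : F →+ B // Function.Surjective ((QuotientAddGroup.mk' N).comp β) ∧
        ((QuotientAddGroup.mk' N).comp β).ker = R} * Nat.card K ^ Module.finrank ℤ F =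
      if Nonempty ((B ⧸ N) ≃+ K) then numAut K * Nat.card B ^ Module.finrank ℤ F else 0 := by
  have card_lifts := card_hom_comp_mul_card_pow (QuotientAddGroup.mk'_surjective N)
    fun γ : F →+ B ⧸ N => Function.Surjective γ ∧ γ.ker = R
  rw [card_surjective_ker_eq] at card_lifts
  split_ifs with h
  · obtain ⟨f⟩ := h
    rwa [if_pos ⟨e.trans f.symm⟩, Nat.card_congr f.toEquiv, numAut_congr f] at card_lifts
  · rw [if_neg fun ⟨f⟩ => h ⟨f.symm.trans e⟩, zero_mul] at card_lifts
    rw [(mul_eq_zero.1 card_lifts).resolve_right (pow_ne_zero _ Nat.card_pos.ne'), zero_mul]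

lemma card_surjective_map_ker_mul_card_pow [Module.Finite ℤ A] [Finite B] {R : AddSubgroup F}
    (e : (F ⧸ R) ≃+ K) :
    Nat.card {ψ : A × F →+ B //
        Function.Surjective ψ ∧ ψ.ker.map (AddMonoidHom.snd A F) = R} *
        Nat.card K ^ Module.finrank ℤ F =
      Nat.card {α : A →+ B // Nonempty ((B ⧸ α.range) ≃+ K)} *
        (numAut K * Nat.card B ^ Module.finrank ℤ F) := by
  have := finite_addMonoidHom F B
  have := finite_addMonoidHom A B
  have := Fintype.ofFinite (A →+ B)
  simp only [card_surjective_map_ker_eq_sum, Finset.sum_mul,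
    card_surjective_mk_comp_mul_card_pow e, ← Finset.sum_filter, Finset.sum_const, smul_eq_mul,
    Nat.card_eq_fintype_card, Fintype.card_subtype]

end Extension

/-! ### The distribution of random quotients -/

section Distribution

variable {p : ℕ}

lemma inv_mul_inv_pow_mul_eq {a k c q t n : ℕ} (ha : a ≠ 0) (hq : q ≠ 0) {r : ℕ}
    (h : t * k ^ r = n * (a * q ^ r)) (s : ℕ) :
    (c : ℝ≥0∞)⁻¹ * ((q : ℝ≥0∞) ^ s)⁻¹ * n =
      (a : ℝ≥0∞)⁻¹ * (k : ℝ≥0∞) ^ r * ((c : ℝ≥0∞)⁻¹ * ((q : ℝ≥0∞) ^ (s + r))⁻¹ * t) := by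
  have h_cast : (t : ℝ≥0∞) * (k : ℝ≥0∞) ^ r = n * (a * (q : ℝ≥0∞) ^ r) := by exact_mod_cast h
  have inv_mul_cancel_a : (a : ℝ≥0∞)⁻¹ * a = 1 :=
    ENNReal.inv_mul_cancel (Nat.cast_ne_zero.2 ha) (by finiteness)
  have q_pow_ne_zero : (q : ℝ≥0∞) ^ r ≠ 0 := pow_ne_zero r (Nat.cast_ne_zero.2 hq)
  have inv_mul_pow_cancel : ((q : ℝ≥0∞) ^ r)⁻¹ * (q : ℝ≥0∞) ^ r = 1 :=
    ENNReal.inv_mul_cancel q_pow_ne_zero (by finiteness)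
  rw [pow_add, ENNReal.mul_inv (.inr (by finiteness)) (.inr q_pow_ne_zero)]
  calc _ = (c : ℝ≥0∞)⁻¹ * ((q : ℝ≥0∞) ^ s)⁻¹ * n * ((a : ℝ≥0∞)⁻¹ * a) *
        (((q : ℝ≥0∞) ^ r)⁻¹ * (q : ℝ≥0∞) ^ r) := by
          rw [inv_mul_cancel_a, inv_mul_pow_cancel, mul_one, mul_one]
    _ = (a : ℝ≥0∞)⁻¹ * (c : ℝ≥0∞)⁻¹ * ((q : ℝ≥0∞) ^ s)⁻¹ * ((q : ℝ≥0∞) ^ r)⁻¹ *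
        (n * (a * (q : ℝ≥0∞) ^ r)) := by ring
    _ = _ := by rw [← h_cast]; ring

theorem tsum_card_quotient_range (hp : p.Prime) (s : ℕ) (A K : Type*) [AddCommGroup A]
    [Module.Finite ℤ A] [AddCommGroup K] [Finite K] :
    ∑' lam, (numAut (CLGroup p lam) : ℝ≥0∞)⁻¹ * ((Nat.card (CLGroup p lam) : ℝ≥0∞) ^ s)⁻¹ *
        Nat.card {α : A →+ CLGroup p lam // Nonempty ((CLGroup p lam ⧸ α.range) ≃+ K)} =
      (numAut K : ℝ≥0∞)⁻¹ * primaryWeight p s (Nat.card K) * subgroupZeta p s A := by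
  obtain ⟨r, f, hf⟩ := Module.Finite.exists_fin' ℤ K
  let R := f.toAddMonoidHom.ker
  let e : ((Fin r → ℤ) ⧸ R) ≃+ K :=
    QuotientAddGroup.quotientKerEquivOfSurjective f.toAddMonoidHom hf
  have index_R : R.index = Nat.card K := Nat.card_congr e.toEquiv
  have finrank_eq : Module.finrank ℤ (Fin r → ℤ) = r := Module.finrank_fin_fun ℤ
  calc _ = (numAut K : ℝ≥0∞)⁻¹ * (Nat.card K : ℝ≥0∞) ^ r *
        ∑' lam, (numAut (CLGroup p lam) : ℝ≥0∞)⁻¹ *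
          ((Nat.card (CLGroup p lam) : ℝ≥0∞) ^ (s + r))⁻¹ *
          Nat.card {ψ : A × (Fin r → ℤ) →+ CLGroup p lam //
            Function.Surjective ψ ∧ ψ.ker.map (AddMonoidHom.snd A (Fin r → ℤ)) = R} := by
        rw [← ENNReal.tsum_mul_left]
        refine tsum_congr fun lam => ?_
        have := finite_clGroup hp lam
        have card_eq := card_surjective_map_ker_mul_card_pow (A := A) (B := CLGroup p lam) e
        rw [finrank_eq] at card_eq
        exact inv_mul_inv_pow_mul_eq (numAut_ne_zero K) Nat.card_pos.ne' card_eq s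
    _ = (numAut K : ℝ≥0∞)⁻¹ * (Nat.card K : ℝ≥0∞) ^ r *
        (subgroupZeta p s A * primaryWeight p (s + r) (Nat.card K)) := by
        rw [tsum_clGroup_card_surjective hp (s + r) fun L => L.map (.snd A (Fin r → ℤ)) = R]
        have tsum_over_R := tsum_subgroupsOver_primaryWeight hp s A R
        rw [finrank_eq, index_R] at tsum_over_R
        rw [tsum_over_R]
    _ = _ := by
        rw [← primaryWeight_add_mul_pow hp s r]
        ring

lemma card_quotient_closure_range_eq (u : ℕ) (B K : Type*) [AddCommGroup B] [AddCommGroup K] :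
    Nat.card {b : Fin u → B // Nonempty ((B ⧸ AddSubgroup.closure (Set.range b)) ≃+ K)} =
      Nat.card {α : (Fin u → ℤ) →+ B // Nonempty ((B ⧸ α.range) ≃+ K)} := by
  let e : (Fin u → B) ≃ ((Fin u → ℤ) →+ B) :=
    ((Pi.basisFun ℤ (Fin u)).constr ℤ).toEquiv.trans (addMonoidHomLequivInt ℤ).symm.toEquiv
  have range_e (b : Fin u → B) : (e b).range = AddSubgroup.closure (Set.range b) := by
    rw [← Submodule.span_int_eq_addSubgroupClosure, ← (Pi.basisFun ℤ (Fin u)).constr_range ℤ]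
    rfl
  exact Nat.card_congr <| e.subtypeEquiv fun b => by rw [range_e]

lemma clProd_zero_eq_prod_mul (hp : p.Prime) (u : ℕ) :
    clProd p 0 = (∏ i ∈ Finset.range u, (1 - ((p : ℝ) ^ (i + 1))⁻¹)) * clProd p u := by
  have factor_eq (v k : ℕ) :
      1 - (p : ℝ) ^ (-((k : ℤ) + 1 + v)) = 1 - ((p : ℝ) ^ (k + v + 1))⁻¹ := by
    rw [zpow_neg, add_right_comm]
    norm_cast
  have summable_tail : Summable fun k : ℕ => -((p : ℝ) ^ (k + u + 1))⁻¹ := by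
    have inv_lt_one : (p : ℝ)⁻¹ < 1 := inv_lt_one_of_one_lt₀ (Nat.one_lt_cast.2 hp.one_lt)
    simpa only [inv_pow, add_assoc] using
      ((summable_nat_add_iff (u + 1)).2 (summable_geometric_of_lt_one (by positivity)
        inv_lt_one)).neg
  have multipliable_tail : Multipliable fun k : ℕ => 1 - ((p : ℝ) ^ (k + u + 1))⁻¹ := by
    simpa only [sub_eq_add_neg] using Real.multipliable_one_add_of_summable summable_tail
  simp only [clProd, factor_eq]
  exact (Multipliable.prod_mul_tprod_nat_mul' (f := fun k : ℕ => 1 - ((p : ℝ) ^ (k + 1))⁻¹)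
    multipliable_tail).symm

lemma toReal_subgroupZeta_fin_fun_int (hp : p.Prime) (u : ℕ) :
    (subgroupZeta p u (Fin u → ℤ)).toReal =
      (∏ i ∈ Finset.range u, (1 - ((p : ℝ) ^ (i + 1))⁻¹))⁻¹ := by
  have zeta_eq := subgroupZeta_fin_fun_int hp 0 u
  simp only [zero_add] at zeta_eq
  rw [zeta_eq, ENNReal.toReal_prod, ← Finset.prod_inv_distrib]
  refine Finset.prod_congr rfl fun i _ => ?_
  have inv_le_one : ((p : ℝ≥0∞) ^ (i + 1))⁻¹ ≤ 1 :=
    ENNReal.inv_le_one.2 (one_le_pow₀ (Nat.one_le_cast.2 hp.one_le))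
  rw [ENNReal.toReal_inv, ENNReal.toReal_sub_of_le inv_le_one ENNReal.one_ne_top]
  simp

lemma prod_one_sub_inv_pow_ne_zero (hp : p.Prime) (u : ℕ) :
    ∏ i ∈ Finset.range u, (1 - ((p : ℝ) ^ (i + 1))⁻¹) ≠ 0 :=
  Finset.prod_ne_zero_iff.2 fun i _ => sub_ne_zero.2
    (inv_lt_one_of_one_lt₀ (one_lt_pow₀ (Nat.one_lt_cast.2 hp.one_lt) i.succ_ne_zero)).ne'

lemma numAut_inv_mul_primaryWeight_mul_subgroupZeta_ne_top (hp : p.Prime) (u : ℕ) (K : Type*)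
    [AddCommGroup K] [Finite K] :
    (numAut K : ℝ≥0∞)⁻¹ * primaryWeight p u (Nat.card K) * subgroupZeta p u (Fin u → ℤ) ≠ ⊤ := by
  have numAut_inv_ne_top : (numAut K : ℝ≥0∞)⁻¹ ≠ ⊤ :=
    ENNReal.inv_ne_top.2 (Nat.cast_ne_zero.2 (numAut_ne_zero K))
  have weight_ne_top : primaryWeight p u (Nat.card K) ≠ ⊤ := by
    rw [primaryWeight]
    split_ifs
    · exact ENNReal.inv_ne_top.2 (pow_ne_zero u (Nat.cast_ne_zero.2 Nat.card_pos.ne'))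
    · exact ENNReal.zero_ne_top
  have zeta_ne_top : subgroupZeta p u (Fin u → ℤ) ≠ ⊤ := by
    refine (ENNReal.toReal_ne_zero.1 ?_).2
    rw [toReal_subgroupZeta_fin_fun_int hp]
    exact inv_ne_zero (prod_one_sub_inv_pow_ne_zero hp u)
  exact ENNReal.mul_ne_top (ENNReal.mul_ne_top numAut_inv_ne_top weight_ne_top) zeta_ne_top

lemma clMeasure_zero_mul_eq (p u n : ℕ) (B : Type*) [AddCommGroup B] :
    clMeasure p 0 B * ((Nat.card B : ℝ) ^ u)⁻¹ * n =
      clProd p 0 * ((numAut B : ℝ≥0∞)⁻¹ * ((Nat.card B : ℝ≥0∞) ^ u)⁻¹ * n).toReal := by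
  simp only [clMeasure, ENNReal.toReal_mul, ENNReal.toReal_inv, ENNReal.toReal_pow,
    ENNReal.toReal_natCast, pow_zero, inv_one, one_mul]
  ring

lemma clMeasure_eq_clProd_zero_mul (hp : p.Prime) (u : ℕ) {K : Type*} [AddCommGroup K]
    (hK : ∃ n, Nat.card K = p ^ n) :
    clMeasure p u K = clProd p 0 * ((numAut K : ℝ≥0∞)⁻¹ * primaryWeight p u (Nat.card K) *
      subgroupZeta p u (Fin u → ℤ)).toReal := by
  have prod_ne_zero := prod_one_sub_inv_pow_ne_zero hp u
  rw [primaryWeight, if_pos hK, ENNReal.toReal_mul, toReal_subgroupZeta_fin_fun_int hp,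
    clProd_zero_eq_prod_mul hp u]
  simp only [clMeasure, ENNReal.toReal_mul, ENNReal.toReal_inv, ENNReal.toReal_pow,
    ENNReal.toReal_natCast]
  generalize ∏ i ∈ Finset.range u, (1 - ((p : ℝ) ^ (i + 1))⁻¹) = P at prod_ne_zero ⊢
  field_simp

end Distribution

end CohenLenstra

open CohenLenstra in
theorem cl_quotient_distribution_general (p : ℕ) (hp : p.Prime) (u : ℕ) (K : Type*)
    [AddCommGroup K] (hK : ∃ n : ℕ, Nat.card K = p ^ n) :
    HasSum (fun lam : Multiset ℕ+ =>
      clMeasure p 0 (CLGroup p lam) * ((Nat.card (CLGroup p lam) : ℝ) ^ u)⁻¹ *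
        (Nat.card {b : Fin u → CLGroup p lam //
          Nonempty ((CLGroup p lam ⧸ AddSubgroup.closure (Set.range b)) ≃+ K)} : ℝ))
      (clMeasure p u K) := by
  have : Finite K := by
    obtain ⟨n, card_eq⟩ := hK
    exact Nat.finite_of_card_ne_zero (card_eq ▸ pow_ne_zero n hp.ne_zero)
  have tsum_eq := tsum_card_quotient_range hp u (Fin u → ℤ) K
  have tsum_ne_top := tsum_eq.trans_ne (numAut_inv_mul_primaryWeight_mul_subgroupZeta_ne_top hp u K)
  rw [clMeasure_eq_clProd_zero_mul hp u hK, ← tsum_eq,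
    ENNReal.tsum_toReal_eq (ENNReal.ne_top_of_tsum_ne_top tsum_ne_top)]
  simp only [clMeasure_zero_mul_eq, card_quotient_closure_range_eq]
  exact (ENNReal.hasSum_toReal tsum_ne_top).mul_left _

/-- If `B` is chosen at random according to `μ^0` and `b_1, …, b_u` are chosen uniformly and
independently in `B`, then `B/⟨b_1,…,b_u⟩` is distributed according to `μ^u`:
for every finite abelian `p`-group `K`,
`∑_B μ^0(B) · |B|^{-u} · #{(b_1,…,b_u) ∈ B^u : B/⟨b_1,…,b_u⟩ ≅ K} = μ^u(K)`. -/
theorem cl_quotient_distribution (p : ℕ) (hp : p.Prime) (hodd : Odd p) (u : ℕ)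
    (K : Type) [AddCommGroup K] (hK : ∃ n : ℕ, Nat.card K = p ^ n) :
    ∑' lam : Multiset ℕ+,
      clMeasure p 0 (CLGroup p lam) * ((Nat.card (CLGroup p lam) : ℝ) ^ u)⁻¹ *
        (Nat.card {b : Fin u → CLGroup p lam //
          Nonempty ((CLGroup p lam ⧸ AddSubgroup.closure (Set.range b)) ≃+ K)} : ℝ)
      = clMeasure p u K :=
  (cl_quotient_distribution_general p hp u K hK).tsum_eq
end
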